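/- (Completeness of the multi-succedent calculus.) If pred-IGL ⊨ A, i.e. K, w ⊨^ρ ⟨A⟩ₓ for every Kripke structure K in pred-IGL, every world w and w-environment ρ, then mℓIGL ⊢ x:A, i.e. there is an ∞-proof in mℓIK4 of the sequent ∅ ⇒ x:A. -/

import Mathlib

namespace IGL

/-- Modal formulas over propositional symbols indexed by naturals. -/
inductive Formula : Type
  | atom : ℕ → Formula
  | bot  : Formula
  | and  : Formula → Formula → Formula
  | or   : Formula → Formula → Formula
  | imp  : Formula → Formula → Formula
  | box  : Formula → Formula
  | dia  : Formula → Formula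

/-- ¬A abbreviates A → ⊥. -/
def Formula.neg (A : Formula) : Formula := Formula.imp A Formula.bot

/-- Löb's axiom □(□A→A)→□A. -/
def lobAx (A : Formula) : Formula :=
  Formula.imp (Formula.box (Formula.imp (Formula.box A) A)) (Formula.box A)

/-- Boolean evaluation of a formula, treating modal (sub)formulas and atoms as
propositional atoms; used to define substitution instances of classical
propositional tautologies. -/
def evalCPL (v : Formula → Bool) : Formula → Bool
  | Formula.atom n  => v (Formula.atom n)
  | Formula.bot     => false
  | Formula.and A B => evalCPL v A && evalCPL v B
  | Formula.or  A B => evalCPL v A || evalCPL v B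
  | Formula.imp A B => !evalCPL v A || evalCPL v B
  | Formula.box A   => v (Formula.box A)
  | Formula.dia A   => v (Formula.dia A)

/-- A (substitution instance of a) theorem of classical propositional logic. -/
def Taut (A : Formula) : Prop := ∀ v, evalCPL v A = true

/-- The modal logic K: classical propositional logic, axiom k, modus ponens, necessitation. -/
inductive KProof : Formula → Prop
  | taut {A : Formula} : Taut A → KProof A
  | axK (A B : Formula) :
      KProof (Formula.imp (Formula.box (Formula.imp A B))
        (Formula.imp (Formula.box A) (Formula.box B)))
  | mp {A B : Formula} : KProof (Formula.imp A B) → KProof A → KProof B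
  | nec {A : Formula} : KProof A → KProof (Formula.box A)

/-- The modal logic K4: K plus axiom 4. -/
inductive K4Proof : Formula → Prop
  | taut {A : Formula} : Taut A → K4Proof A
  | axK (A B : Formula) :
      K4Proof (Formula.imp (Formula.box (Formula.imp A B))
        (Formula.imp (Formula.box A) (Formula.box B)))
  | ax4 (A : Formula) :
      K4Proof (Formula.imp (Formula.box A) (Formula.box (Formula.box A)))
  | mp {A B : Formula} : K4Proof (Formula.imp A B) → K4Proof A → K4Proof B
  | nec {A : Formula} : K4Proof A → K4Proof (Formula.box A)

/-- Gödel–Löb logic GL: K4 plus Löb's axiom. -/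
inductive GLProof : Formula → Prop
  | taut {A : Formula} : Taut A → GLProof A
  | axK (A B : Formula) :
      GLProof (Formula.imp (Formula.box (Formula.imp A B))
        (Formula.imp (Formula.box A) (Formula.box B)))
  | ax4 (A : Formula) :
      GLProof (Formula.imp (Formula.box A) (Formula.box (Formula.box A)))
  | axLob (A : Formula) : GLProof (lobAx A)
  | mp {A B : Formula} : GLProof (Formula.imp A B) → GLProof A → GLProof B
  | nec {A : Formula} : GLProof A → GLProof (Formula.box A)

/-- Classical relational (Kripke) satisfaction. -/
def sat {W : Type} (R : W → W → Prop) (V : W → ℕ → Prop) : W → Formula → Prop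
  | w, Formula.atom n  => V w n
  | _, Formula.bot     => False
  | w, Formula.and A B => sat R V w A ∧ sat R V w B
  | w, Formula.or  A B => sat R V w A ∨ sat R V w B
  | w, Formula.imp A B => sat R V w A → sat R V w B
  | w, Formula.box A   => ∀ v, R w v → sat R V v A
  | w, Formula.dia A   => ∃ v, R w v ∧ sat R V v A

/-- A frame satisfies `A` if every model based on it satisfies `A` at every world. -/
def FrameSat (W : Type) (R : W → W → Prop) (A : Formula) : Prop :=
  ∀ (V : W → ℕ → Prop) (w : W), sat R V w A

/-- A relation is terminating if it admits no infinite path. -/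
def Terminating {α : Type} (r : α → α → Prop) : Prop :=
  ¬ ∃ f : ℕ → α, ∀ n, r (f n) (f (n + 1))

/-! ### Labelled sequents -/

/-- A labelled formula `x : A`. -/
abbrev LFormula := ℕ × Formula

/-- A labelled sequent `R, Γ ⇒ Δ`: a set of relational atoms and two
multisets of labelled formulas. -/
structure Sequent : Type where
  rel : Set (ℕ × ℕ)
  left : Multiset LFormula
  right : Multiset LFormula

/-- Variables occurring in a set of relational atoms. -/
def relVars (R : Set (ℕ × ℕ)) : Set ℕ := {z | ∃ w, (z, w) ∈ R ∨ (w, z) ∈ R}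

/-- Labels occurring in a multiset of labelled formulas. -/
def mLabels (Γ : Multiset LFormula) : Set ℕ := {z | ∃ A, (z, A) ∈ Γ}

/-- The variables/labels occurring in a sequent. -/
def Sequent.vars (S : Sequent) : Set ℕ := relVars S.rel ∪ mLabels S.left ∪ mLabels S.right

/-- `y` is a fresh label for the sequent `S`. -/
def Fresh (y : ℕ) (S : Sequent) : Prop := y ∉ S.vars

/-- A sequent has exactly one formula on the right-hand side. -/
def SingleRHS (S : Sequent) : Prop := Multiset.card S.right = 1

/-- Rule instances of the standard labelled calculi, presented as a relation
between a conclusion and its list of premisses.  The flag `tr` enables the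
transitivity rule (giving ℓK4 rather than ℓK), the flag `thn` enables the
relational thinning rule `th`, and the flag `ir` imposes the restriction that
the →-right and □-right rules have exactly one formula on the RHS (giving the
multi-succedent intuitionistic system mℓIK4). -/
inductive Rule (tr thn ir : Bool) : Sequent → List Sequent → Prop
  | id (R : Set (ℕ × ℕ)) (x p : ℕ) :
      Rule tr thn ir ⟨R, {(x, Formula.atom p)}, {(x, Formula.atom p)}⟩ []
  | cut (R : Set (ℕ × ℕ)) (Γ Γ' Δ Δ' : Multiset LFormula) (x : ℕ) (A : Formula) :
      Rule tr thn ir ⟨R, Γ + Γ', Δ + Δ'⟩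
        [⟨R, Γ, (x, A) ::ₘ Δ⟩, ⟨R, (x, A) ::ₘ Γ', Δ'⟩]
  | wkL (R : Set (ℕ × ℕ)) (Γ Δ : Multiset LFormula) (x : ℕ) (A : Formula) :
      Rule tr thn ir ⟨R, (x, A) ::ₘ Γ, Δ⟩ [⟨R, Γ, Δ⟩]
  | wkR (R : Set (ℕ × ℕ)) (Γ Δ : Multiset LFormula) (x : ℕ) (A : Formula) :
      Rule tr thn ir ⟨R, Γ, (x, A) ::ₘ Δ⟩ [⟨R, Γ, Δ⟩]
  | ctrL (R : Set (ℕ × ℕ)) (Γ Δ : Multiset LFormula) (x : ℕ) (A : Formula) :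
      Rule tr thn ir ⟨R, (x, A) ::ₘ Γ, Δ⟩ [⟨R, (x, A) ::ₘ (x, A) ::ₘ Γ, Δ⟩]
  | ctrR (R : Set (ℕ × ℕ)) (Γ Δ : Multiset LFormula) (x : ℕ) (A : Formula) :
      Rule tr thn ir ⟨R, Γ, (x, A) ::ₘ Δ⟩ [⟨R, Γ, (x, A) ::ₘ (x, A) ::ₘ Δ⟩]
  | th (R R' : Set (ℕ × ℕ)) (Γ Δ : Multiset LFormula) :
      thn = true → Rule tr thn ir ⟨R ∪ R', Γ, Δ⟩ [⟨R, Γ, Δ⟩]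
  | botL (R : Set (ℕ × ℕ)) (Γ Δ : Multiset LFormula) (x : ℕ) :
      Rule tr thn ir ⟨R, (x, Formula.bot) ::ₘ Γ, Δ⟩ []
  | impL (R : Set (ℕ × ℕ)) (Γ Γ' Δ Δ' : Multiset LFormula) (x : ℕ) (A B : Formula) :
      Rule tr thn ir ⟨R, (x, Formula.imp A B) ::ₘ (Γ + Γ'), Δ + Δ'⟩
        [⟨R, Γ, (x, A) ::ₘ Δ⟩, ⟨R, (x, B) ::ₘ Γ', Δ'⟩]
  | impR (R : Set (ℕ × ℕ)) (Γ Δ : Multiset LFormula) (x : ℕ) (A B : Formula) :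
      (ir = true → Δ = 0) →
      Rule tr thn ir ⟨R, Γ, (x, Formula.imp A B) ::ₘ Δ⟩ [⟨R, (x, A) ::ₘ Γ, (x, B) ::ₘ Δ⟩]
  | andL₁ (R : Set (ℕ × ℕ)) (Γ Δ : Multiset LFormula) (x : ℕ) (A B : Formula) :
      Rule tr thn ir ⟨R, (x, Formula.and A B) ::ₘ Γ, Δ⟩ [⟨R, (x, A) ::ₘ Γ, Δ⟩]
  | andL₂ (R : Set (ℕ × ℕ)) (Γ Δ : Multiset LFormula) (x : ℕ) (A B : Formula) :
      Rule tr thn ir ⟨R, (x, Formula.and A B) ::ₘ Γ, Δ⟩ [⟨R, (x, B) ::ₘ Γ, Δ⟩]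
  | orL (R : Set (ℕ × ℕ)) (Γ Δ : Multiset LFormula) (x : ℕ) (A B : Formula) :
      Rule tr thn ir ⟨R, (x, Formula.or A B) ::ₘ Γ, Δ⟩
        [⟨R, (x, A) ::ₘ Γ, Δ⟩, ⟨R, (x, B) ::ₘ Γ, Δ⟩]
  | orR₁ (R : Set (ℕ × ℕ)) (Γ Δ : Multiset LFormula) (x : ℕ) (A B : Formula) :
      Rule tr thn ir ⟨R, Γ, (x, Formula.or A B) ::ₘ Δ⟩ [⟨R, Γ, (x, A) ::ₘ Δ⟩]
  | orR₂ (R : Set (ℕ × ℕ)) (Γ Δ : Multiset LFormula) (x : ℕ) (A B : Formula) :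
      Rule tr thn ir ⟨R, Γ, (x, Formula.or A B) ::ₘ Δ⟩ [⟨R, Γ, (x, B) ::ₘ Δ⟩]
  | andR (R : Set (ℕ × ℕ)) (Γ Δ : Multiset LFormula) (x : ℕ) (A B : Formula) :
      Rule tr thn ir ⟨R, Γ, (x, Formula.and A B) ::ₘ Δ⟩
        [⟨R, Γ, (x, A) ::ₘ Δ⟩, ⟨R, Γ, (x, B) ::ₘ Δ⟩]
  | diaL (R : Set (ℕ × ℕ)) (Γ Δ : Multiset LFormula) (x y : ℕ) (A : Formula) :
      Fresh y ⟨R, (x, Formula.dia A) ::ₘ Γ, Δ⟩ →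
      Rule tr thn ir ⟨R, (x, Formula.dia A) ::ₘ Γ, Δ⟩
        [⟨insert (x, y) R, (y, A) ::ₘ Γ, Δ⟩]
  | diaR (R : Set (ℕ × ℕ)) (Γ Δ : Multiset LFormula) (x y : ℕ) (A : Formula) :
      (x, y) ∈ R →
      Rule tr thn ir ⟨R, Γ, (x, Formula.dia A) ::ₘ Δ⟩ [⟨R, Γ, (y, A) ::ₘ Δ⟩]
  | boxR (R : Set (ℕ × ℕ)) (Γ Δ : Multiset LFormula) (x y : ℕ) (A : Formula) :
      (ir = true → Δ = 0) →
      Fresh y ⟨R, Γ, (x, Formula.box A) ::ₘ Δ⟩ →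
      Rule tr thn ir ⟨R, Γ, (x, Formula.box A) ::ₘ Δ⟩
        [⟨insert (x, y) R, Γ, (y, A) ::ₘ Δ⟩]
  | boxL (R : Set (ℕ × ℕ)) (Γ Δ : Multiset LFormula) (x y : ℕ) (A : Formula) :
      (x, y) ∈ R →
      Rule tr thn ir ⟨R, (x, Formula.box A) ::ₘ Γ, Δ⟩ [⟨R, (y, A) ::ₘ Γ, Δ⟩]
  | trans (R : Set (ℕ × ℕ)) (Γ Δ : Multiset LFormula) (x y z : ℕ) :
      tr = true → (x, y) ∈ R → (y, z) ∈ R →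
      Rule tr thn ir ⟨R, Γ, Δ⟩ [⟨insert (x, z) R, Γ, Δ⟩]

/-- The labelled calculus ℓK. -/
def RuleLK : Sequent → List Sequent → Prop := Rule false true false

/-- The labelled calculus ℓK4 (= ℓK + transitivity rule). -/
def RuleLK4 : Sequent → List Sequent → Prop := Rule true true false

/-- ℓK4 without the thinning rule th. -/
def RuleLK4NoTh : Sequent → List Sequent → Prop := Rule true false false

/-- The multi-succedent intuitionistic calculus mℓIK4: ℓK4 where the →-right
and □-right rules must have exactly one formula on the RHS. -/
def RuleMLIK4 : Sequent → List Sequent → Prop := Rule true true true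

/-- The single-succedent intuitionistic calculus ℓIK4: the restriction of ℓK4
to sequents with exactly one formula on the RHS. -/
def RuleLIK4 : Sequent → List Sequent → Prop :=
  fun S ps => RuleLK4 S ps ∧ SingleRHS S ∧ ∀ p ∈ ps, SingleRHS p

/-- ℓIK4 without the thinning rule th. -/
def RuleLIK4NoTh : Sequent → List Sequent → Prop :=
  fun S ps => RuleLK4NoTh S ps ∧ SingleRHS S ∧ ∀ p ∈ ps, SingleRHS p

/-- Finite (wellfounded) derivability from a set of rule instances. -/
inductive Deriv (rule : Sequent → List Sequent → Prop) : Sequent → Prop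
  | step (S : Sequent) (prems : List Sequent) :
      rule S prems → (∀ S' ∈ prems, Deriv rule S') → Deriv rule S

/-! ### Non-wellfounded proofs -/

/-- A (possibly infinite) preproof of `S₀`: a tree of sequents, given as a
partial labelling of finite paths (lists of child indices), whose root is `S₀`
and in which every node is the conclusion of a rule instance whose premisses
are exactly its children. -/
structure Preproof (rule : Sequent → List Sequent → Prop) (S₀ : Sequent) : Type where
  node : List ℕ → Option Sequent
  root : node [] = some S₀
  children : ∀ p S, node p = some S →
    ∃ prems : List Sequent, rule S prems ∧ ∀ i : ℕ, node (p ++ [i]) = prems[i]?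

/-- The path of length `n` along the branch determined by `f`. -/
def branchPath (f : ℕ → ℕ) (n : ℕ) : List ℕ := (List.range n).map f

/-- An infinite sequence of sequents (a branch) has a progressing trace:
from some point on there are labels `x i` occurring in the `i`-th sequent with
either `x (i+1) = x i` or the relational atom `(x i) R (x (i+1))` occurring in
the `i`-th sequent, the latter happening infinitely often. -/
def Progressing (Sb : ℕ → Sequent) : Prop :=
  ∃ (k : ℕ) (x : ℕ → ℕ),
    (∀ i, k ≤ i → x i ∈ (Sb i).vars) ∧
    (∀ i, k ≤ i → x (i + 1) = x i ∨ (x i, x (i + 1)) ∈ (Sb i).rel) ∧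
    (∀ n, ∃ i, n ≤ i ∧ k ≤ i ∧ (x i, x (i + 1)) ∈ (Sb i).rel)

/-- `S₀` has an ∞-proof: a preproof all of whose infinite branches have a
progressing trace. -/
def InfProof (rule : Sequent → List Sequent → Prop) (S₀ : Sequent) : Prop :=
  ∃ P : Preproof rule S₀,
    ∀ (f : ℕ → ℕ) (Sb : ℕ → Sequent),
      (∀ n, P.node (branchPath f n) = some (Sb n)) → Progressing Sb

/-! ### Birelational semantics -/

/-- A birelational model on the set of worlds `W`: an intuitionistic partial
order `le`, an accessibility relation `acc` satisfying the frame conditions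
(F1) and (F2), and a monotone valuation. -/
structure Birel (W : Type) : Type where
  le : W → W → Prop
  le_refl : ∀ w, le w w
  le_trans : ∀ u v w, le u v → le v w → le u w
  le_antisymm : ∀ u v, le u v → le v u → u = v
  acc : W → W → Prop
  F1 : ∀ w w' v, le w w' → acc w v → ∃ v', le v v' ∧ acc w' v'
  F2 : ∀ w v v', acc w v → le v v' → ∃ w', le w w' ∧ acc w' v'
  val : W → ℕ → Prop
  val_mono : ∀ w w', le w w' → ∀ p, val w p → val w' p

/-- Birelational satisfaction. -/
def bsat {W : Type} (B : Birel W) : W → Formula → Prop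
  | w, Formula.atom p  => B.val w p
  | _, Formula.bot     => False
  | w, Formula.and A C => bsat B w A ∧ bsat B w C
  | w, Formula.or  A C => bsat B w A ∨ bsat B w C
  | w, Formula.imp A C => ∀ w', B.le w w' → bsat B w' A → bsat B w' C
  | w, Formula.box A   => ∀ w' v, B.le w w' → B.acc w' v → bsat B v A
  | w, Formula.dia A   => ∃ v, B.acc w v ∧ bsat B v A

/-- Membership in the class birel-IGL: the accessibility relation is
transitive and the composite ≤;R is terminating. -/
def BirelIGL {W : Type} (B : Birel W) : Prop :=
  Transitive B.acc ∧ Terminating (fun u v => ∃ m, B.le u m ∧ B.acc m v)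

/-- An interpretation of a sequent into a birelational model: a map on labels
sending relational atoms of the sequent to accessibility-related worlds. -/
def Interp {W : Type} (B : Birel W) (I : ℕ → W) (S : Sequent) : Prop :=
  ∀ x y, (x, y) ∈ S.rel → B.acc (I x) (I y)

/-- `B, I ⊨ S`. -/
def seqSat {W : Type} (B : Birel W) (I : ℕ → W) (S : Sequent) : Prop :=
  (∀ q ∈ S.left, bsat B (I q.1) q.2) → ∃ q ∈ S.right, bsat B (I q.1) q.2

/-- `B ⊨ S`: satisfaction under every interpretation. -/
def seqValid {W : Type} (B : Birel W) (S : Sequent) : Prop :=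
  ∀ I : ℕ → W, Interp B I S → seqSat B I S

/-- Conjunction of a nonempty list of formulas `A ∧ B₁ ∧ ... ∧ Bₙ`. -/
def conjList : Formula → List Formula → Formula
  | A, [] => A
  | A, B :: l => Formula.and A (conjList B l)

/-! ### (Quasi-)trees -/

/-- A set of relational atoms is a tree: there is a root from which every
other variable is reachable by a unique path of relational atoms. -/
def IsTree (R : Set (ℕ × ℕ)) : Prop :=
  ∃ x₀ ∈ relVars R, ∀ x ∈ relVars R, x ≠ x₀ →
    ∃! l : List ℕ, l ≠ [] ∧ List.Chain (fun a b => (a, b) ∈ R) x₀ l ∧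
      l.getLast? = some x

/-- A quasi-tree: squeezed between a tree and its transitive closure. -/
def IsQuasiTree (R : Set (ℕ × ℕ)) : Prop :=
  ∃ R₀ : Set (ℕ × ℕ), IsTree R₀ ∧ R₀ ⊆ R ∧
    ∀ q ∈ R, Relation.TransGen (fun a b => (a, b) ∈ R₀) q.1 q.2

/-- The (single-succedent) sequent `R, Γ ⇒ x:A` is quasi-tree-like. -/
def QuasiTreeLike (R : Set (ℕ × ℕ)) (Γ : Multiset LFormula) (x : ℕ) : Prop :=
  (R = ∅ ∧ mLabels Γ ⊆ {x}) ∨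
  (IsQuasiTree R ∧ mLabels Γ ∪ {x} ⊆ relVars R)

/-! ### Kripke predicate structures -/

/-- A Kripke (predicate) structure: partially ordered worlds, growing nonempty
domains, monotone interpretations of the unary predicates, and growing binary
relations on the domains. -/
structure Kripke (W D : Type) : Type where
  le : W → W → Prop
  le_refl : ∀ w, le w w
  le_trans : ∀ u v w, le u v → le v w → le u w
  le_antisymm : ∀ u v, le u v → le v u → u = v
  Dom : W → Set D
  Dom_ne : ∀ w, (Dom w).Nonempty
  Dom_mono : ∀ w w', le w w' → Dom w ⊆ Dom w'
  Pr : W → ℕ → Set D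
  Pr_sub : ∀ w p, Pr w p ⊆ Dom w
  Pr_mono : ∀ w w' p, le w w' → Pr w p ⊆ Pr w' p
  Rel : W → D → D → Prop
  Rel_dom : ∀ w d e, Rel w d e → d ∈ Dom w ∧ e ∈ Dom w
  Rel_mono : ∀ w w' d e, le w w' → Rel w d e → Rel w' d e

/-- Satisfaction `K, w ⊨^ρ ⟨A⟩ₓ` of the standard translation of `A`; since the
translation of `A` at `x` has only `x` free, satisfaction is presented through
the value `d = ρ x` of the environment at `x`. -/
def ksat {W D : Type} (K : Kripke W D) : W → D → Formula → Prop
  | w, d, Formula.atom p  => d ∈ K.Pr w p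
  | _, _, Formula.bot     => False
  | w, d, Formula.and A B => ksat K w d A ∧ ksat K w d B
  | w, d, Formula.or  A B => ksat K w d A ∨ ksat K w d B
  | w, d, Formula.imp A B => ∀ w', K.le w w' → ksat K w' d A → ksat K w' d B
  | w, d, Formula.box A   => ∀ w' e, K.le w w' → K.Rel w' d e → ksat K w' e A
  | w, d, Formula.dia A   => ∃ e, K.Rel w d e ∧ ksat K w e A

/-- Membership in the class pred-IGL: each `R_w` is transitive and the
composite `≤_{D_W} ; R_{D_W}` on pairs `(w, d)` with `d ∈ D_w` is terminating. -/
def PredIGL {W D : Type} (K : Kripke W D) : Prop :=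
  (∀ w, Transitive (K.Rel w)) ∧
  ¬ ∃ (f : ℕ → W) (g : ℕ → D),
      ∀ n, g n ∈ K.Dom (f n) ∧ K.le (f n) (f (n + 1)) ∧
        K.Rel (f (n + 1)) (g n) (g (n + 1))


abbrev Prov (S : Sequent) : Prop := InfProof RuleMLIK4 S

theorem Progressing.of_shift {Sb : ℕ → Sequent} (k : ℕ)
    (h : Progressing (fun i => Sb (i + k))) : Progressing Sb := by
  obtain ⟨k0, x, h1, h2, h3⟩ := h
  refine ⟨k0 + k, fun i => x (i - k), ?_, ?_, ?_⟩
  · intro i hi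
    have := h1 (i - k) (by omega)
    simpa [Nat.sub_add_cancel (show k ≤ i by omega)] using this
  · intro i hi
    have := h2 (i - k) (by omega)
    simp only [Nat.sub_add_cancel (show k ≤ i by omega)] at this
    show x (i + 1 - k) = x (i - k) ∨ (x (i - k), x (i + 1 - k)) ∈ _
    rwa [show i + 1 - k = i - k + 1 by omega]
  · intro n
    obtain ⟨i, hi1, hi2, hi3⟩ := h3 n
    refine ⟨i + k, by omega, by omega, ?_⟩
    show (x (i + k - k), x (i + k + 1 - k)) ∈ _
    rw [show i + k + 1 - k = i + 1 by omega, show i + k - k = i by omega]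
    exact hi3

theorem progress_of_eventually (Sb : ℕ → Sequent) (d : ℕ → ℕ)
    (h : ∀ k, ∃ N, ∀ i, N ≤ i → (d k, d (k + 1)) ∈ (Sb i).rel) : Progressing Sb := by
  choose N hN using h
  let J : ℕ → ℕ := fun n => Nat.rec 0 (fun n j => if N j ≤ N 0 + n then j + 1 else j) n
  have hJs : ∀ n, J (n + 1) = if N (J n) ≤ N 0 + n then J n + 1 else J n := fun n => rfl
  have hinv : ∀ n, ∀ j, j < J n → N j ≤ N 0 + n := by
    intro n
    induction n with
    | zero => intro j hj; exact absurd hj (Nat.not_lt_zero _)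
    | succ n ih =>
      intro j hj
      rw [hJs] at hj
      split_ifs at hj with hc
      · rcases Nat.lt_succ_iff_lt_or_eq.mp hj with h | h
        · have := ih j h; omega
        · subst h; omega
      · have := ih j hj; omega
  have hprog : ∀ n, ∃ m, n ≤ m ∧ N (J m) ≤ N 0 + m := by
    intro n
    by_contra hcon
    push Not at hcon
    have hconst : ∀ m, J (n + m) = J n := by
      intro m
      induction m with
      | zero => rfl
      | succ m ih =>
        rw [← add_assoc, hJs, if_neg, ih]
        have := hcon (n + m) (by omega)
        omega
    have := hcon (n + N (J n)) (by omega)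
    rw [hconst] at this
    omega
  refine ⟨N 0, fun i => d (J (i - N 0)), ?_, ?_, ?_⟩
  · intro i hi
    simp only
    rcases Nat.eq_zero_or_pos (J (i - N 0)) with h0 | h0
    · rw [h0]
      exact Or.inl (Or.inl ⟨_, Or.inl (hN 0 i hi)⟩)
    · have := hinv (i - N 0) (J (i - N 0) - 1) (by omega)
      have := hN _ i (by omega : N (J (i - N 0) - 1) ≤ i)
      rw [Nat.sub_add_cancel h0] at this
      exact Or.inl (Or.inl ⟨_, Or.inr this⟩)
  · intro i hi
    simp only
    rw [show i + 1 - N 0 = (i - N 0) + 1 by omega, hJs]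
    split_ifs with hc
    · right; exact hN _ i (by omega)
    · left; rfl
  · intro n
    obtain ⟨m, hm, hc⟩ := hprog n
    refine ⟨N 0 + m, by omega, by omega, ?_⟩
    simp only
    rw [show N 0 + m + 1 - N 0 = m + 1 by omega, show N 0 + m - N 0 = m by omega, hJs, if_pos hc]
    exact hN _ _ hc

def goPath {T : Type*} (nx : T → List T) : T → List ℕ → Option T
  | s, [] => some s
  | s, i :: p => ((nx s)[i]?).bind (fun t => goPath nx t p)

theorem goPath_append {T : Type*} (nx : T → List T) (p : List ℕ) (i : ℕ) :
    ∀ s, goPath nx s (p ++ [i]) = (goPath nx s p).bind (fun t => (nx t)[i]?) := by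
  induction p with
  | nil => intro s; cases h : (nx s)[i]? <;> simp [goPath, h]
  | cons j p ih =>
    intro s
    simp only [List.cons_append, goPath]
    cases (nx s)[j]? with
    | none => rfl
    | some t => simpa using ih t

theorem branchPath_succ (f : ℕ → ℕ) (n : ℕ) :
    branchPath f (n + 1) = branchPath f n ++ [f n] := by
  simp [branchPath, List.range_succ]

theorem infProof_of_sys {T : Type*} (seq : T → Sequent) (E : T → T → Prop)
    (hs : ∀ s, ∃ ts : List T, RuleMLIK4 (seq s) (ts.map seq) ∧ ∀ t ∈ ts, E s t) (s0 : T)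
    (hp : ∀ g : ℕ → T, g 0 = s0 → (∀ n, E (g n) (g (n + 1))) →
      Progressing (fun n => seq (g n))) : Prov (seq s0) := by
  choose nx hr hE using hs
  refine ⟨⟨fun p => (goPath nx s0 p).map seq, rfl, ?_⟩, ?_⟩
  · intro p S hS
    obtain ⟨t, ht, rfl⟩ := Option.map_eq_some_iff.mp hS
    refine ⟨_, hr t, fun i => ?_⟩
    simp only [goPath_append, ht, Option.bind_some, List.getElem?_map]
  · intro f Sb hSb
    have h1 : ∀ n, ∃ t, goPath nx s0 (branchPath f n) = some t ∧ seq t = Sb n :=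
      fun n => Option.map_eq_some_iff.mp (hSb n)
    choose g hg hgS using h1
    have : Progressing (fun n => seq (g n)) := by
      apply hp g
      · have := hg 0
        simpa [branchPath, goPath] using this.symm
      · intro n
        have h2 := hg (n + 1)
        rw [branchPath_succ, goPath_append, hg n, Option.bind_some] at h2
        exact hE _ _ (List.mem_of_getElem? h2)
    simpa only [hgS] using this

inductive Mac (r0 : Set (ℕ × ℕ)) (L : Sequent → Prop) : ℕ → Sequent → Prop
  | leaf (n S) : L S → Mac r0 L n S
  | closed (n S) : Prov S → Mac r0 L n S
  | step (n S ps) : r0 ⊆ S.rel → RuleMLIK4 S ps → (∀ S' ∈ ps, Mac r0 L n S') →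
      Mac r0 L (n + 1) S

theorem Mac.mono {r0 L n S} (h : Mac r0 L n S) : ∀ m, n ≤ m → Mac r0 L m S := by
  induction h with
  | leaf n S h => intro m _; exact Mac.leaf m S h
  | closed n S h => intro m _; exact Mac.closed m S h
  | step n S ps h1 h2 _ ih =>
    intro m hm
    obtain ⟨m, rfl⟩ : ∃ k, m = k + 1 := ⟨m - 1, by omega⟩
    exact Mac.step m S ps h1 h2 (fun S' hS' => ih S' hS' m (by omega))

def EMac (r0 : Set (ℕ × ℕ)) (L : Sequent → Prop) (S : Sequent) : Prop := ∃ n, Mac r0 L n S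

theorem EMac.leaf {r0 L S} (h : L S) : EMac r0 L S := ⟨0, Mac.leaf _ _ h⟩
theorem EMac.closed {r0 L S} (h : Prov S) : EMac r0 L S := ⟨0, Mac.closed _ _ h⟩
theorem EMac.step {r0 : Set (ℕ × ℕ)} {L} {S : Sequent} (ps : List Sequent) (h1 : r0 ⊆ S.rel)
    (h2 : RuleMLIK4 S ps)
    (h3 : ∀ S' ∈ ps, EMac r0 L S') : EMac r0 L S := by
  have : ∃ n, ∀ S' ∈ ps, Mac r0 L n S' := by
    clear h2
    induction ps with
    | nil => exact ⟨0, by simp⟩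
    | cons a l ih =>
      obtain ⟨n, hn⟩ := ih (fun S' h => h3 S' (List.mem_cons_of_mem _ h))
      obtain ⟨m, hm⟩ := h3 a List.mem_cons_self
      refine ⟨max n m, ?_⟩
      intro S' hS'
      rcases List.mem_cons.mp hS' with rfl | h
      · exact hm.mono _ (le_max_right _ _)
      · exact (hn _ h).mono _ (le_max_left _ _)
  obtain ⟨n, hn⟩ := this
  exact ⟨n + 1, Mac.step n S ps h1 h2 hn⟩

theorem rule_stall (S : Sequent) : RuleMLIK4 S [S] := by
  have := Rule.th (tr := true) (thn := true) (ir := true) S.rel ∅ S.left S.right rfl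
  rw [Set.union_empty] at this
  exact this

inductive MNode {T : Type*} (seq : T → Sequent) (E : T → T → Prop)
  | run (s : T) (n : ℕ) (S : Sequent)
      (h : Mac (seq s).rel (fun S' => ∃ t, E s t ∧ seq t = S') n S) : MNode seq E
  | cl (S0 : Sequent) (P : Preproof RuleMLIK4 S0)
      (hP : ∀ (f : ℕ → ℕ) (Sb : ℕ → Sequent),
      (∀ n, P.node (branchPath f n) = some (Sb n)) → Progressing Sb)
      (p : List ℕ) (S : Sequent) (h : P.node p = some S) : MNode seq E

def MNode.sq {T : Type*} {seq : T → Sequent} {E : T → T → Prop} : MNode seq E → Sequent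
  | run _ _ S _ => S
  | cl _ _ _ _ S _ => S

inductive MNode.Ed {T : Type*} {seq : T → Sequent} {E : T → T → Prop} :
    MNode seq E → MNode seq E → Prop
  | rr (s n S h t m S' h') : (seq s).rel ⊆ S.rel → (t = s ∧ m < n) ∨ E s t →
      Ed (run s n S h) (run t m S' h')
  | rc (s n S h S0 P hP S' h') : Ed (run s n S h) (cl S0 P hP [] S' h')
  | cc (S0 P hP p S h i S' h') : Ed (cl S0 P hP p S h) (cl S0 P hP (p ++ [i]) S' h')

theorem infproof_of_macro {T : Type*} (seq : T → Sequent) (E : T → T → Prop) (s0 : T)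
    (hE : ∀ s t, E s t → (seq s).rel ⊆ (seq t).rel)
    (hM : ∀ s, EMac (seq s).rel (fun S' => ∃ t, E s t ∧ seq t = S') (seq s))
    (hA : ∀ f : ℕ → T, f 0 = s0 → (∀ n, E (f n) (f (n + 1))) →
      ∃ d : ℕ → ℕ, ∀ k, ∃ n, (d k, d (k + 1)) ∈ (seq (f n)).rel) :
    Prov (seq s0) := by
  obtain ⟨n0, hn0⟩ := hM s0
  refine infProof_of_sys (T := MNode seq E) MNode.sq MNode.Ed ?_ (MNode.run s0 n0 _ hn0) ?_
  · intro nd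
    cases nd with
    | run s n S h =>
      by_cases hS : Prov S
      · obtain ⟨P, hP⟩ := hS
        exact ⟨[MNode.cl S P hP [] S P.root], rule_stall S, by
          intro t ht
          rw [List.mem_singleton] at ht
          subst ht
          exact MNode.Ed.rc ..⟩
      · cases h with
        | closed n S h => exact absurd h hS
        | leaf n S h =>
          obtain ⟨t, ht, rfl⟩ := h
          obtain ⟨m, hm⟩ := hM t
          exact ⟨[MNode.run t m _ hm], rule_stall _, by
            intro t ht
            rw [List.mem_singleton] at ht
            subst ht
            exact MNode.Ed.rr _ _ _ _ _ _ _ _ (hE _ _ (by assumption)) (Or.inr (by assumption))⟩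
        | step n S ps h1 h2 h3 =>
          refine ⟨ps.attach.map (fun q => MNode.run s n q.1 (h3 q.1 q.2)), ?_, ?_⟩
          · rw [List.map_map]
            have : ps.attach.map (MNode.sq ∘
              (fun q => (MNode.run s n q.1 (h3 q.1 q.2) : MNode seq E))) = ps := by
              exact List.attach_map_subtype_val ps
            rw [this]; exact h2
          · intro t ht
            obtain ⟨q, _, rfl⟩ := List.mem_map.mp ht
            exact MNode.Ed.rr _ _ _ _ _ _ _ _ h1 (Or.inl ⟨rfl, Nat.lt_succ_self _⟩)
    | cl S0 P hP p S h =>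
      obtain ⟨ps, hr, hc⟩ := P.children p S h
      have hx : ∀ i : Fin ps.length, P.node (p ++ [(i : ℕ)]) = some ps[i] := by
        intro i; rw [hc]; simp
      refine ⟨(List.finRange ps.length).map
        (fun i : Fin ps.length => MNode.cl S0 P hP (p ++ [(i : ℕ)]) ps[i] (hx i)), ?_, ?_⟩
      · rw [List.map_map]
        have : (List.finRange ps.length).map (MNode.sq ∘ (fun i : Fin ps.length =>
          (MNode.cl S0 P hP (p ++ [(i : ℕ)]) ps[i] (hx i) : MNode seq E))) = ps := by
          apply List.ext_getElem
          · simp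
          · intro i h1 h2
            simp [MNode.sq]
        rw [this]; exact hr
      · intro t ht
        obtain ⟨q, _, rfl⟩ := List.mem_map.mp ht
        exact MNode.Ed.cc ..
  · intro g g0 hg
    by_cases hcl : ∃ k, ∀ s n S h, g k ≠ MNode.run s n S h
    · classical
      have hk := Nat.find_spec hcl
      have hmin := fun m => Nat.find_min hcl (m := m)
      set k := Nat.find hcl
      have hk0 : k ≠ 0 := by
        intro h0
        rw [h0] at hk
        exact hk _ _ _ _ g0
      obtain ⟨j, hj⟩ : ∃ j, k = j + 1 := ⟨k - 1, by omega⟩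
      have h1 := hmin j (by omega)
      push Not at h1
      obtain ⟨s, n, S, h, hs⟩ := h1
      have hej := hg j
      rw [hs, ← hj] at hej
      obtain ⟨S0, P, hP, S', h', hS'⟩ : ∃ S0 P hP S' h', g k = MNode.cl S0 P hP [] S' h' := by
        generalize g k = u at *
        cases hej with
        | rr => exact absurd rfl (hk _ _ _ _)
        | rc => exact ⟨_, _, _, _, _, rfl⟩
      have key : ∀ n p S' h', g (n + k) = MNode.cl S0 P hP p S' h' →
          ∃ i S' h', g (n + 1 + k) = MNode.cl S0 P hP (p ++ [i]) S' h' := by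
        intro n p S' h' he
        have h2 := hg (n + k)
        rw [he, show n + k + 1 = n + 1 + k by omega] at h2
        generalize g (n + 1 + k) = u at *
        cases h2 with
        | cc => exact ⟨_, _, _, rfl⟩
      have key2 : ∀ n, ∃ p S' h', g (n + k) = MNode.cl S0 P hP p S' h' := by
        intro n
        induction n with
        | zero => rw [Nat.zero_add]; exact ⟨_, _, _, hS'⟩
        | succ n ih =>
          obtain ⟨p, S', h', e⟩ := ih
          obtain ⟨i, S', h', e⟩ := key n p S' h' e
          exact ⟨_, _, _, e⟩
      choose p Sq hpq hgp using key2
      have hpi : ∀ n, ∃ i, p (n + 1) = p n ++ [i] := by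
        intro n
        obtain ⟨i, S', h', e⟩ := key n _ _ _ (hgp n)
        rw [hgp (n + 1)] at e
        injection e with e1 e2 e3 e4
        exact ⟨i, e3⟩
      choose f hf using hpi
      have hp0 : p 0 = [] := by
        have e := hgp 0
        rw [Nat.zero_add, hS'] at e
        injection e with e1 e2 e3 e4
        exact e3.symm
      have hpf : ∀ n, p n = branchPath f n := by
        intro n
        induction n with
        | zero => rw [hp0]; rfl
        | succ n ih => rw [hf, branchPath_succ, ih]
      apply Progressing.of_shift k
      have := hP f Sq (fun n => by rw [← hpf]; exact hpq n)
      have e : (fun i => (g (i + k)).sq) = Sq := by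
        funext i; rw [hgp]; rfl
      simpa only [e] using this
    · push Not at hcl
      choose s n S h hgs using hcl
      have hst : ∀ i, (seq (s i)).rel ⊆ (S i).rel ∧
          ((s (i + 1) = s i ∧ n (i + 1) < n i) ∨ E (s i) (s (i + 1))) := by
        intro i
        have := hg i
        rw [hgs i, hgs (i + 1)] at this
        cases this with
        | rr => constructor <;> assumption
      have hnx : ∀ i, ∃ j, i ≤ j ∧ E (s j) (s (j + 1)) ∧ s j = s i := by
        have : ∀ m i, n i = m → ∃ j, i ≤ j ∧ E (s j) (s (j + 1)) ∧ s j = s i := by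
          intro m
          induction m using Nat.strong_induction_on with
          | _ m ih =>
            intro i hi
            rcases (hst i).2 with ⟨h1, h2⟩ | h1
            · obtain ⟨j, hj1, hj2, hj3⟩ := ih (n (i + 1)) (by omega) (i + 1) rfl
              exact ⟨j, by omega, hj2, hj3.trans h1⟩
            · exact ⟨i, le_rfl, h1, rfl⟩
        exact fun i => this _ i rfl
      choose nxt hn1 hn2 hn3 using hnx
      let τ : ℕ → ℕ := fun k => Nat.rec (nxt 0) (fun _ t => nxt (t + 1)) k
      have hτ : ∀ k, τ (k + 1) = nxt (τ k + 1) := fun k => rfl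
      have hEτ : ∀ k, E (s (τ k)) (s (τ (k + 1))) := by
        intro k
        rw [hτ, hn3]
        cases k with
        | zero => exact hn2 0
        | succ k => rw [hτ]; exact hn2 _
      obtain ⟨d, hd⟩ := hA (fun k => s (τ k)) (by
        have e := hgs 0
        rw [g0] at e
        injection e with e1
        exact (hn3 0).trans e1.symm) hEτ
      have hmono1 : ∀ i, (seq (s i)).rel ⊆ (seq (s (i + 1))).rel := by
        intro i
        rcases (hst i).2 with ⟨h1, h2⟩ | h1
        · rw [h1]
        · exact hE _ _ h1
      have hmono : ∀ i j, i ≤ j → (seq (s i)).rel ⊆ (seq (s j)).rel := by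
        intro i j hij
        induction hij with
        | refl => exact subset_rfl
        | step _ ih => exact ih.trans (hmono1 _)
      apply progress_of_eventually _ d
      intro k
      obtain ⟨m, hm⟩ := hd k
      refine ⟨τ m, fun i hi => ?_⟩
      rw [hgs i]
      exact (hst i).1 (hmono _ _ hi hm)

theorem Prov.step {S : Sequent} (ps : List Sequent) (h : RuleMLIK4 S ps)
    (hp : ∀ S' ∈ ps, Prov S') : Prov S := by
  refine infproof_of_macro (T := Unit) (fun _ => S) (fun _ _ => False) () ?_ ?_ ?_
  · intro _ _ h; exact h.elim
  · intro _
    exact EMac.step ps subset_rfl h (fun S' hS' => EMac.closed (hp S' hS'))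
  · intro f _ h; exact (h 0).elim



def Clo (r0 : Set (ℕ × ℕ)) (Q : Sequent → Prop) : Prop :=
  ∀ (S : Sequent) (ps : List Sequent), r0 ⊆ S.rel → RuleMLIK4 S ps → (∀ S' ∈ ps, Q S') → Q S

theorem clo_prov : Clo ∅ Prov := fun _ ps _ h hp => Prov.step ps h hp
theorem clo_emac (r0 L) : Clo r0 (EMac r0 L) := fun _ ps h1 h2 h3 => EMac.step ps h1 h2 h3

section
variable {r0 : Set (ℕ × ℕ)} {Q : Sequent → Prop} (hQ : Clo r0 Q) {R : Set (ℕ × ℕ)}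
  (hr : r0 ⊆ R)

theorem Clo.one (hQ : Clo r0 Q) {S S' : Sequent} (hr : r0 ⊆ S.rel) (h : RuleMLIK4 S [S'])
    (h' : Q S') : Q S :=
  hQ S [S'] hr h (by intro T hT; rw [List.mem_singleton] at hT; subst hT; exact h')

theorem Clo.two (hQ : Clo r0 Q) {S S' S'' : Sequent} (hr : r0 ⊆ S.rel)
    (h : RuleMLIK4 S [S', S''])
    (h' : Q S') (h'' : Q S'') : Q S :=
  hQ S [S', S''] hr h (by
    intro T hT
    rcases List.mem_cons.mp hT with rfl | hT
    · exact h'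
    · rw [List.mem_singleton] at hT; subst hT; exact h'')

include hQ hr

theorem Clo.subL {Γ Γ' Δ : Multiset LFormula} (h : ∀ a ∈ Γ, a ∈ Γ') (hq : Q ⟨R, Γ, Δ⟩) :
    Q ⟨R, Γ', Δ⟩ := by
  have h1 : Q ⟨R, Γ' + Γ, Δ⟩ := by
    clear h
    induction Γ' using Multiset.induction_on with
    | empty => simpa using hq
    | cons a s ih =>
      rw [Multiset.cons_add]
      exact hQ.one hr (Rule.wkL _ _ _ a.1 a.2) ih
  clear hq
  induction Γ using Multiset.induction_on with
  | empty => simpa using h1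
  | cons a s ih =>
    apply ih
    · intro b hb; exact h b (Multiset.mem_cons_of_mem hb)
    · obtain ⟨t, rfl⟩ := Multiset.exists_cons_of_mem (h a (Multiset.mem_cons_self _ _))
      rw [Multiset.cons_add]
      refine hQ.one hr (Rule.ctrL _ _ _ a.1 a.2) ?_
      rw [Multiset.add_cons, Multiset.cons_add] at h1
      exact h1

theorem Clo.subR {Γ Δ Δ' : Multiset LFormula} (h : ∀ a ∈ Δ, a ∈ Δ') (hq : Q ⟨R, Γ, Δ⟩) :
    Q ⟨R, Γ, Δ'⟩ := by
  have h1 : Q ⟨R, Γ, Δ' + Δ⟩ := by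
    clear h
    induction Δ' using Multiset.induction_on with
    | empty => simpa using hq
    | cons a s ih =>
      rw [Multiset.cons_add]
      exact hQ.one hr (Rule.wkR _ _ _ a.1 a.2) ih
  clear hq
  induction Δ using Multiset.induction_on with
  | empty => simpa using h1
  | cons a s ih =>
    apply ih
    · intro b hb; exact h b (Multiset.mem_cons_of_mem hb)
    · obtain ⟨t, rfl⟩ := Multiset.exists_cons_of_mem (h a (Multiset.mem_cons_self _ _))
      rw [Multiset.cons_add]
      refine hQ.one hr (Rule.ctrR _ _ _ a.1 a.2) ?_
      rw [Multiset.add_cons, Multiset.cons_add] at h1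
      exact h1

theorem Clo.sub {Γ Γ' Δ Δ' : Multiset LFormula} (h : ∀ a ∈ Γ, a ∈ Γ') (h' : ∀ a ∈ Δ, a ∈ Δ')
    (hq : Q ⟨R, Γ, Δ⟩) : Q ⟨R, Γ', Δ'⟩ :=
  hQ.subR hr h' (hQ.subL hr h hq)

theorem Clo.cut {Γ Δ : Multiset LFormula} (x : ℕ) (A : Formula)
    (h1 : Q ⟨R, Γ, (x, A) ::ₘ Δ⟩) (h2 : Q ⟨R, (x, A) ::ₘ Γ, Δ⟩) : Q ⟨R, Γ, Δ⟩ := by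
  apply hQ.sub hr (Γ := Γ + Γ) (Δ := Δ + Δ) (by simp) (by simp)
  exact hQ.two hr (Rule.cut _ _ _ _ _ x A) h1 h2

theorem Clo.impL {Γ Δ : Multiset LFormula} (x : ℕ) (A B : Formula)
    (hm : (x, Formula.imp A B) ∈ Γ)
    (h1 : Q ⟨R, Γ, (x, A) ::ₘ Δ⟩) (h2 : Q ⟨R, (x, B) ::ₘ Γ, Δ⟩) : Q ⟨R, Γ, Δ⟩ := by
  apply hQ.sub hr (Γ := (x, Formula.imp A B) ::ₘ (Γ + Γ)) (Δ := Δ + Δ) _ (by simp)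
  · exact hQ.two hr (Rule.impL _ _ _ _ _ x A B) h1 h2
  · intro a ha
    simp only [Multiset.mem_cons, Multiset.mem_add, or_self] at ha
    rcases ha with rfl | ha <;> assumption

theorem Clo.impR {Γ Δ : Multiset LFormula} (x : ℕ) (A B : Formula)
    (hm : (x, Formula.imp A B) ∈ Δ)
    (h1 : Q ⟨R, (x, A) ::ₘ Γ, {(x, B)}⟩) : Q ⟨R, Γ, Δ⟩ := by
  apply hQ.sub hr (Γ := Γ) (Δ := (x, Formula.imp A B) ::ₘ 0) (fun _ h => h)
    (by intro a ha; simp at ha; subst ha; exact hm)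
  exact hQ.one hr (Rule.impR _ _ 0 x A B (fun _ => rfl)) h1

theorem fresh_mono {y : ℕ} {Γ Γ' Δ Δ' : Multiset LFormula} (h : ∀ a ∈ Γ, a ∈ Γ')
    (h' : ∀ a ∈ Δ, a ∈ Δ') (hf : Fresh y ⟨R, Γ', Δ'⟩) : Fresh y ⟨R, Γ, Δ⟩ := by
  rintro ((h1 | ⟨A, h1⟩) | ⟨A, h1⟩)
  · exact hf (Or.inl (Or.inl h1))
  · exact hf (Or.inl (Or.inr ⟨A, h _ h1⟩))
  · exact hf (Or.inr ⟨A, h' _ h1⟩)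

theorem Clo.boxR {Γ Δ : Multiset LFormula} (x y : ℕ) (A : Formula)
    (hm : (x, Formula.box A) ∈ Δ) (hf : Fresh y ⟨R, Γ, Δ⟩)
    (h1 : Q ⟨insert (x, y) R, Γ, {(y, A)}⟩) : Q ⟨R, Γ, Δ⟩ := by
  have h0 : ∀ a ∈ ((x, Formula.box A) ::ₘ 0 : Multiset LFormula), a ∈ Δ := by
    intro a ha; simp at ha; subst ha; exact hm
  apply hQ.sub hr (Γ := Γ) (Δ := (x, Formula.box A) ::ₘ 0) (fun _ h => h) h0
  exact hQ.one hr (Rule.boxR _ _ 0 x y A (fun _ => rfl)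
    (fresh_mono hQ hr (fun _ h => h) h0 hf)) h1

theorem Clo.diaL {Γ Δ : Multiset LFormula} (x y : ℕ) (A : Formula)
    (hm : (x, Formula.dia A) ∈ Γ) (hf : Fresh y ⟨R, Γ, Δ⟩)
    (h1 : Q ⟨insert (x, y) R, (y, A) ::ₘ Γ, Δ⟩) : Q ⟨R, Γ, Δ⟩ := by
  have h0 : ∀ a ∈ ((x, Formula.dia A) ::ₘ Γ : Multiset LFormula), a ∈ Γ := by
    intro a ha; simp at ha; rcases ha with rfl | ha <;> assumption
  apply hQ.sub hr (Δ := Δ) h0 (fun _ h => h)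
  exact hQ.one hr (Rule.diaL _ _ _ x y A
    (fresh_mono hQ hr h0 (fun _ h => h) hf)) h1

theorem Clo.boxL {Γ Δ : Multiset LFormula} (x y : ℕ) (A : Formula)
    (hm : (x, Formula.box A) ∈ Γ) (hR : (x, y) ∈ R)
    (h1 : Q ⟨R, (y, A) ::ₘ Γ, Δ⟩) : Q ⟨R, Γ, Δ⟩ := by
  apply hQ.sub hr (Γ := (x, Formula.box A) ::ₘ Γ) (Δ := Δ)
    (by intro a ha; simp at ha; rcases ha with rfl | ha <;> assumption) (fun _ h => h)
  exact hQ.one hr (Rule.boxL _ _ _ x y A hR) h1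

theorem Clo.diaR {Γ Δ : Multiset LFormula} (x y : ℕ) (A : Formula)
    (hm : (x, Formula.dia A) ∈ Δ) (hR : (x, y) ∈ R)
    (h1 : Q ⟨R, Γ, (y, A) ::ₘ Δ⟩) : Q ⟨R, Γ, Δ⟩ := by
  apply hQ.sub hr (Γ := Γ) (Δ := (x, Formula.dia A) ::ₘ Δ)
    (fun _ h => h) (by intro a ha; simp at ha; rcases ha with rfl | ha <;> assumption)
  exact hQ.one hr (Rule.diaR _ _ _ x y A hR) h1

theorem Clo.thin {R' : Set (ℕ × ℕ)} {Γ Δ : Multiset LFormula} (h : R ⊆ R') (h1 : Q ⟨R, Γ, Δ⟩) :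
    Q ⟨R', Γ, Δ⟩ := by
  have := Rule.th (tr := true) (thn := true) (ir := true) R R' Γ Δ rfl
  rw [Set.union_eq_self_of_subset_left h] at this
  exact hQ.one (hr.trans h) this h1

theorem Clo.transGen {x z : ℕ} {Γ Δ : Multiset LFormula}
    (h : Relation.TransGen (fun a b => (a, b) ∈ R) x z)
    (h1 : Q ⟨insert (x, z) R, Γ, Δ⟩) : Q ⟨R, Γ, Δ⟩ := by
  induction h with
  | single h => rwa [Set.insert_eq_of_mem h] at h1
  | tail h2 h3 ih =>
    rename_i b c
    apply ih
    refine hQ.one (hr.trans (Set.subset_insert _ _))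
      (Rule.trans _ _ _ x b c rfl (Set.mem_insert _ _) (Set.mem_insert_of_mem _ h3)) ?_
    refine hQ.thin (hr.trans (Set.subset_insert _ _)) ?_ h1
    intro a ha
    rcases ha with rfl | ha
    · exact Set.mem_insert _ _
    · exact Set.mem_insert_of_mem _ (Set.mem_insert_of_mem _ ha)

end

theorem Prov.ident (B : Formula) : ∀ (x : ℕ) (R : Set (ℕ × ℕ)), Prov ⟨R, {(x, B)}, {(x, B)}⟩ := by
  have hQ := clo_prov
  have hr : ∀ R : Set (ℕ × ℕ), ∅ ⊆ R := Set.empty_subset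
  induction B with
  | atom p => intro x R; exact Prov.step [] (Rule.id R x p) (by simp)
  | bot => intro x R; exact Prov.step [] (Rule.botL R 0 _ x) (by simp)
  | and A B iA iB =>
    intro x R
    exact hQ.two (hr R) (Rule.andR R _ 0 x A B) (hQ.one (hr R) (Rule.andL₁ R 0 _ x A B) (iA x R))
      (hQ.one (hr R) (Rule.andL₂ R 0 _ x A B) (iB x R))
  | or A B iA iB =>
    intro x R
    exact hQ.two (hr R) (Rule.orL R 0 _ x A B) (hQ.one (hr R) (Rule.orR₁ R _ 0 x A B) (iA x R))
      (hQ.one (hr R) (Rule.orR₂ R _ 0 x A B) (iB x R))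
  | imp A B iA iB =>
    intro x R
    refine hQ.impR (hr R) x A B (by simp) ?_
    refine hQ.impL (hr R) x A B (by simp) ?_ ?_
    · exact hQ.sub (hr R) (by simp) (by simp) (iA x R)
    · exact hQ.sub (hr R) (by simp) (by simp) (iB x R)
  | box A iA =>
    intro x R
    refine hQ.thin (hr _) (hr R) ?_
    refine hQ.boxR (hr _) x (x + 1) A (by simp) ?_ ?_
    · rintro ((⟨w, h1⟩ | ⟨A, h1⟩) | ⟨A, h1⟩) <;> simp at h1
    · refine hQ.boxL (hr _) x (x + 1) A (by simp) (by simp) ?_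
      exact hQ.sub (hr _) (by simp) (by simp) (iA (x + 1) _)
  | dia A iA =>
    intro x R
    refine hQ.thin (hr _) (hr R) ?_
    refine hQ.diaL (hr _) x (x + 1) A (by simp) ?_ ?_
    · rintro ((⟨w, h1⟩ | ⟨A, h1⟩) | ⟨A, h1⟩) <;> simp at h1
    · refine hQ.diaR (hr _) x (x + 1) A (by simp) (by simp) ?_
      exact hQ.sub (hr _) (by simp) (by simp) (iA (x + 1) _)

theorem Prov.idm {R : Set (ℕ × ℕ)} {Γ Δ : Multiset LFormula} (x : ℕ) (B : Formula)
    (h1 : (x, B) ∈ Γ) (h2 : (x, B) ∈ Δ) : Prov ⟨R, Γ, Δ⟩ :=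
  clo_prov.sub (Set.empty_subset _) (by simpa using h1) (by simpa using h2) (Prov.ident B x R)

def lobRel (x : ℕ) : ℕ → Set (ℕ × ℕ)
  | 0 => ∅
  | n + 1 => insert (x, x + n + 1) (insert (x + n, x + n + 1) (lobRel x n))

theorem lobRel_le (x n : ℕ) : ∀ a ∈ lobRel x n, a.1 ≤ x + n ∧ a.2 ≤ x + n := by
  induction n with
  | zero => intro a ha; exact ha.elim
  | succ n ih =>
    rintro a (rfl | rfl | h)
    · constructor <;> simp <;> omega
    · constructor <;> simp <;> omega
    · have := ih a h; omega

theorem lobRel_reach (x n : ℕ) : n = 0 ∨ (x, x + n) ∈ lobRel x n := by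
  cases n with
  | zero => left; rfl
  | succ n => right; left; rfl

theorem Prov.lob (x : ℕ) (B : Formula) (R : Set (ℕ × ℕ)) :
    Prov ⟨R, {(x, (Formula.imp (Formula.box B) B).box)}, {(x, Formula.box B)}⟩ := by
  refine clo_prov.thin (Set.empty_subset ∅) (Set.empty_subset R) ?_
  refine infproof_of_macro (T := ℕ)
    (fun n => ⟨lobRel x n, {(x, (Formula.imp (Formula.box B) B).box)}, {(x + n, Formula.box B)}⟩)
    (fun n m => m = n + 1) 0 ?_ ?_ ?_
  · rintro n m rfl
    exact (Set.subset_insert _ _).trans (Set.subset_insert _ _)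
  · intro n
    have hQ := clo_emac (lobRel x n) (fun S' => ∃ t, t = n + 1 ∧ (⟨lobRel x t,
      {(x, (Formula.imp (Formula.box B) B).box)}, {(x + t, Formula.box B)}⟩ : Sequent) = S')
    show EMac (lobRel x n) _ _
    refine hQ.boxR subset_rfl (x + n) (x + n + 1) B (by simp) ?_ ?_
    · rintro ((⟨w, h1⟩ | ⟨A, h1⟩) | ⟨A, h1⟩)
      · have h2 : ∀ a ∈ lobRel x n, a.1 ≤ x + n ∧ a.2 ≤ x + n := lobRel_le x n
        rcases h1 with h1 | h1
        · have := (h2 _ h1).1; simp at this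
        · have := (h2 _ h1).2; simp at this
      · simp only [Multiset.mem_singleton, Prod.mk.injEq] at h1; omega
      · simp only [Multiset.mem_singleton, Prod.mk.injEq] at h1; omega
    · have hs := Set.subset_insert (x + n, x + n + 1) (lobRel x n)
      refine hQ.transGen (x := x) (z := x + n + 1) hs ?_ ?_
      · rcases lobRel_reach x n with h | h
        · subst h
          exact Relation.TransGen.single (Set.mem_insert _ _)
        · exact Relation.TransGen.tail (Relation.TransGen.single (Set.mem_insert_of_mem _ h))
            (Set.mem_insert _ _)
      · have hs' := hs.trans (Set.subset_insert (x, x + n + 1) _)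
        refine hQ.boxL hs' x (x + n + 1) _ (Multiset.mem_singleton_self _) (Set.mem_insert _ _) ?_
        refine hQ.impL hs' (x + n + 1) B.box B (Multiset.mem_cons_self _ _) ?_ ?_
        · refine hQ.sub hs' (Γ := {(x, (Formula.imp (Formula.box B) B).box)})
            (Δ := {(x + n + 1, B.box)}) (by simp) (by simp) ?_
          exact EMac.leaf ⟨n + 1, rfl, rfl⟩
        · exact EMac.closed (Prov.idm (x + n + 1) B (by simp) (by simp))
  · intro f h0 hs
    have hf : ∀ n, f n = n := by
      intro n; induction n with
      | zero => exact h0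
      | succ n ih => rw [hs, ih]
    refine ⟨fun k => x + k, fun k => ⟨k + 1, ?_⟩⟩
    simp only [hf]
    exact Or.inr (Or.inl rfl)

/-! closed patterns -/
section
variable {R : Set (ℕ × ℕ)} {Γ Δ : Multiset LFormula}

theorem Prov.botL (x : ℕ) (h : (x, Formula.bot) ∈ Γ) : Prov ⟨R, Γ, Δ⟩ := by
  obtain ⟨t, rfl⟩ := Multiset.exists_cons_of_mem h
  exact Prov.step [] (Rule.botL R t _ x) (by simp)

theorem Prov.andL₁ (x : ℕ) (A B : Formula) (h : (x, Formula.and A B) ∈ Γ) (h' : (x, A) ∈ Δ) :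
    Prov ⟨R, Γ, Δ⟩ := by
  refine clo_prov.sub (Set.empty_subset _) (Γ := {(x, Formula.and A B)}) (Δ := {(x, A)})
    (by simpa using h) (by simpa using h') ?_
  exact clo_prov.one (Set.empty_subset _) (Rule.andL₁ R 0 _ x A B) (Prov.ident A x R)

theorem Prov.andL₂ (x : ℕ) (A B : Formula) (h : (x, Formula.and A B) ∈ Γ) (h' : (x, B) ∈ Δ) :
    Prov ⟨R, Γ, Δ⟩ := by
  refine clo_prov.sub (Set.empty_subset _) (Γ := {(x, Formula.and A B)}) (Δ := {(x, B)})
    (by simpa using h) (by simpa using h') ?_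
  exact clo_prov.one (Set.empty_subset _) (Rule.andL₂ R 0 _ x A B) (Prov.ident B x R)

theorem Prov.andR (x : ℕ) (A B : Formula) (h : (x, Formula.and A B) ∈ Δ) (hA : (x, A) ∈ Γ)
    (hB : (x, B) ∈ Γ) : Prov ⟨R, Γ, Δ⟩ := by
  refine clo_prov.subR (Set.empty_subset _) (Δ := {(x, Formula.and A B)}) (by simpa using h) ?_
  exact clo_prov.two (Set.empty_subset _) (Rule.andR R _ 0 x A B) (Prov.idm x A hA (by simp))
    (Prov.idm x B hB (by simp))

theorem Prov.orL (x : ℕ) (A B : Formula) (h : (x, Formula.or A B) ∈ Γ) (hA : (x, A) ∈ Δ)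
    (hB : (x, B) ∈ Δ) : Prov ⟨R, Γ, Δ⟩ := by
  refine clo_prov.subL (Set.empty_subset _) (Γ := {(x, Formula.or A B)}) (by simpa using h) ?_
  exact clo_prov.two (Set.empty_subset _) (Rule.orL R 0 _ x A B) (Prov.idm x A (by simp) hA)
    (Prov.idm x B (by simp) hB)

theorem Prov.orR₁ (x : ℕ) (A B : Formula) (h : (x, Formula.or A B) ∈ Δ) (h' : (x, A) ∈ Γ) :
    Prov ⟨R, Γ, Δ⟩ := by
  refine clo_prov.subR (Set.empty_subset _) (Δ := {(x, Formula.or A B)}) (by simpa using h) ?_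
  exact clo_prov.one (Set.empty_subset _) (Rule.orR₁ R _ 0 x A B) (Prov.idm x A h' (by simp))

theorem Prov.orR₂ (x : ℕ) (A B : Formula) (h : (x, Formula.or A B) ∈ Δ) (h' : (x, B) ∈ Γ) :
    Prov ⟨R, Γ, Δ⟩ := by
  refine clo_prov.subR (Set.empty_subset _) (Δ := {(x, Formula.or A B)}) (by simpa using h) ?_
  exact clo_prov.one (Set.empty_subset _) (Rule.orR₂ R _ 0 x A B) (Prov.idm x B h' (by simp))

theorem Prov.impL (x : ℕ) (A B : Formula) (h : (x, Formula.imp A B) ∈ Γ) (hA : (x, A) ∈ Γ)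
    (hB : (x, B) ∈ Δ) : Prov ⟨R, Γ, Δ⟩ :=
  clo_prov.impL (Set.empty_subset _) x A B h (Prov.idm x A hA (by simp))
    (Prov.idm x B (by simp) hB)

theorem Prov.boxL (x z : ℕ) (B : Formula) (h : (x, Formula.box B) ∈ Γ)
    (ht : Relation.TransGen (fun a b => (a, b) ∈ R) x z) (hB : (z, B) ∈ Δ) : Prov ⟨R, Γ, Δ⟩ :=
  clo_prov.transGen (Set.empty_subset _) ht
    (clo_prov.boxL (Set.empty_subset _) x z B h (Set.mem_insert _ _) (Prov.idm z B (by simp) hB))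

theorem Prov.diaR (x z : ℕ) (B : Formula) (h : (x, Formula.dia B) ∈ Δ)
    (ht : Relation.TransGen (fun a b => (a, b) ∈ R) x z) (hB : (z, B) ∈ Γ) : Prov ⟨R, Γ, Δ⟩ :=
  clo_prov.transGen (Set.empty_subset _) ht
    (clo_prov.diaR (Set.empty_subset _) x z B h (Set.mem_insert _ _) (Prov.idm z B hB (by simp)))

theorem Prov.boxLR (z x y : ℕ) (B : Formula) (hf : Fresh y ⟨R, Γ, Δ⟩)
    (h : (z, Formula.box B) ∈ Γ)
    (ht : Relation.ReflTransGen (fun a b => (a, b) ∈ R) z x) (hB : (x, Formula.box B) ∈ Δ) :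
    Prov ⟨R, Γ, Δ⟩ := by
  refine clo_prov.boxR (Set.empty_subset _) x y B hB hf ?_
  refine Prov.boxL z y B h ?_ (by simp)
  refine Relation.TransGen.tail' (b := x) ?_ (Set.mem_insert _ _)
  exact Relation.ReflTransGen.mono (fun a b h => Set.mem_insert_of_mem _ h) _ _ ht

end

namespace Davis

abbrev Ann := ℕ → Option Ordinal.{0}

structure Game where
  P : Type
  Mv : Type
  Resp : P → Mv → P → Prop
  vis : P → Mv → Option ℕ
  A : (ℕ → P) → Prop
  tail : ∀ f, A (fun n => f (n + 1)) ↔ A f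
  visA : ∀ (f : ℕ → P) (ms : ℕ → Mv) (c : ℕ), (∀ n, Resp (f n) (ms n) (f (n + 1))) →
    (∀ N, ∃ n, N ≤ n ∧ vis (f n) (ms n) = some c) → A f

variable (G : Game)

def Game.State : Type 1 := G.P × Ann

variable {G}

def AStep (v : Option ℕ) (α α' : Ann) : Prop :=
  match v with
  | none => α' = α
  | some c => match α c with
    | none => α' = α
    | some γ0 => ∃ γ, γ < γ0 ∧ α' = Function.update α c (some γ)

def Game.Step (G : Game) (s : G.State) (m : G.Mv) (s' : G.State) : Prop :=
  G.Resp s.1 m s'.1 ∧ AStep (G.vis s.1 m) s.2 s'.2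

structure Game.Strat (G : Game) : Type 2 where
  Mem : Type 1
  mv : Mem → G.Mv
  upd : Mem → G.State → G.State → Mem

def WinM (σ : G.Strat) (s : G.State) (m : σ.Mem) : Prop :=
  ∀ (f : ℕ → G.State) (g : ℕ → σ.Mem), f 0 = s → g 0 = m →
    (∀ n, G.Step (f n) (σ.mv (g n)) (f (n + 1))) →
    (∀ n, g (n + 1) = σ.upd (g n) (f n) (f (n + 1))) → G.A (fun n => (f n).1)

def Win (s : G.State) : Prop := ∃ (σ : G.Strat) (m : σ.Mem), WinM σ s m

theorem WinM.step {σ : G.Strat} {s : G.State} {m : σ.Mem} (h : WinM σ s m) {s' : G.State}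
    (hs : G.Step s (σ.mv m) s') : WinM σ s' (σ.upd m s s') := by
  intro f g f0 g0 hf hg
  have := h (fun n => Nat.casesOn n s f) (fun n => Nat.casesOn n m g) rfl rfl
    (by intro n
        cases n with
        | zero => simpa [f0] using hs
        | succ n => exact hf n)
    (by intro n
        cases n with
        | zero => simp [f0, g0]
        | succ n => exact hg n)
  rw [← G.tail] at this
  exact this

theorem tail_add (f : ℕ → G.P) (N : ℕ) : G.A (fun n => f (N + n)) → G.A f := by
  induction N generalizing f with
  | zero => intro h; simpa using h
  | succ N ih =>
    intro h
    apply ih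
    rw [← G.tail]
    have e : (fun n => f (N + (n + 1))) = (fun n => f (N + 1 + n)) := by
      funext n; congr 1; omega
    rw [e]; exact h

theorem win_of_move (s : G.State) (m : G.Mv) (h : ∀ s', G.Step s m s' → Win s') : Win s := by
  classical
  choose σ k0 hk using h
  let τ : G.Strat :=
    { Mem := Option (Σ s' : {s' // G.Step s m s'}, (σ s'.1 s'.2).Mem)
      mv := fun o => match o with
        | none => m
        | some ⟨s', k⟩ => (σ s'.1 s'.2).mv k
      upd := fun o a b => match o with
        | none => if h : G.Step s m b then some ⟨⟨b, h⟩, k0 b h⟩ else none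
        | some ⟨s', k⟩ => some ⟨s', (σ s'.1 s'.2).upd k a b⟩ }
  refine ⟨τ, none, ?_⟩
  intro f g f0 g0 hf hg
  have h1 : G.Step s m (f 1) := by
    have := hf 0; rw [f0, g0] at this; exact this
  let k : ℕ → (σ (f 1) h1).Mem := fun n => Nat.rec (k0 _ h1)
    (fun n k => (σ (f 1) h1).upd k (f (n + 1)) (f (n + 2))) n
  have hgk : ∀ n, g (n + 1) = some ⟨⟨f 1, h1⟩, k n⟩ := by
    intro n
    induction n with
    | zero =>
      rw [hg 0, g0]
      show (if h : G.Step s m (f 1) then some _ else none) = _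
      rw [dif_pos h1]
      rfl
    | succ n ih => rw [hg (n + 1), ih]
  have := hk (f 1) h1 (fun n => f (n + 1)) k rfl rfl
    (by intro n
        have := hf (n + 1)
        rw [hgk] at this
        exact this)
    (fun n => rfl)
  rw [← G.tail]
  exact this

def setC (s : G.State) (c : ℕ) (β : Ordinal.{0}) : G.State := (s.1, Function.update s.2 c (some β))

theorem AStep.none_iff {v : Option ℕ} {α α' : Ann} (h : AStep v α α') (j : ℕ) :
    α' j = none ↔ α j = none := by
  unfold AStep at h
  split at h
  · rw [h]
  · rename_i c
    split at h
    · rw [h]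
    · rename_i γ0 e
      obtain ⟨γ, _, rfl⟩ := h
      by_cases hj : j = c
      · subst hj; simp [e]
      · simp [hj]

theorem AStep.le {v : Option ℕ} {α α' : Ann} (h : AStep v α α') (j : ℕ) :
    α' j = α j ∨ ∃ γ γ0, γ < γ0 ∧ α' j = some γ ∧ α j = some γ0 := by
  unfold AStep at h
  split at h
  · rw [h]; left; rfl
  · rename_i c
    split at h
    · rw [h]; left; rfl
    · rename_i γ0 e
      obtain ⟨γ, hγ, rfl⟩ := h
      by_cases hj : j = c
      · subst hj; right; exact ⟨γ, γ0, hγ, by simp, e⟩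
      · left; simp [hj]

theorem AStep.lt {c : ℕ} {α α' : Ann} (h : AStep (some c) α α') {γ0} (h0 : α c = some γ0) :
    ∃ γ, γ < γ0 ∧ α' c = some γ := by
  simp only [AStep, h0] at h
  obtain ⟨γ, hγ, rfl⟩ := h
  exact ⟨γ, hγ, by simp⟩

theorem AStep.update {v : Option ℕ} {α α' : Ann} (h : AStep v α α') {c : ℕ} (hv : v ≠ some c)
    (β : Ordinal.{0}) :
    AStep v (Function.update α c (some β)) (Function.update α' c (some β)) := by
  cases v with
  | none => simp only [AStep] at h ⊢; rw [h]
  | some d =>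
    have hd : d ≠ c := fun e => hv (by rw [e])
    simp only [AStep] at h ⊢
    rw [Function.update_of_ne hd]
    cases e : α d with
    | none => simp only [e] at h ⊢; rw [h]
    | some γ0 =>
      simp only [e] at h ⊢
      obtain ⟨γ, hγ, rfl⟩ := h
      exact ⟨γ, hγ, Function.update_comm hd _ _ _⟩

theorem AStep.eq_of_none {c : ℕ} {α α' : Ann} (h : AStep (some c) α α') (h0 : α c = none) :
    α' = α := by
  simpa only [AStep, h0] using h

def Lset (u : ℕ → Ordinal.{0}) (k : ℕ) : Set (Option Ordinal.{0}) :=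
  insert none (some '' Set.Iic (u k))

instance (u : ℕ → Ordinal.{0}) (k : ℕ) : Small.{0} (Lset u k) := by
  unfold Lset
  infer_instance

theorem low_bdd (u : ℕ → Ordinal.{0}) (b : G.State → Ordinal.{0}) :
    ∃ B, ∀ s : G.State, (∀ k, s.2 k ∈ Lset u k) → b s ≤ B := by
  let F : G.P × (∀ k, Lset u k) → Ordinal.{0} := fun q => b (q.1, fun k => (q.2 k).1)
  have hb : BddAbove (Set.range F) := Ordinal.bddAbove_of_small
  obtain ⟨B, hB⟩ := hb
  refine ⟨B, fun s hs => hB ⟨(s.1, fun k => ⟨s.2 k, hs k⟩), rfl⟩⟩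

theorem win_of_ann (s0 : G.State) (c : ℕ) (hc : s0.2 c = none)
    (h : ∀ β, Win (setC s0 c β)) : Win s0 := by
  classical
  let Gd : G.State → Prop := fun s => s.2 c = none ∧ ∀ β, Win (setC s c β)
  have hbad : ∀ s : G.State, ∃ β, s.2 c = none → ¬ Gd s → ¬ Win (setC s c β) := by
    intro s
    by_contra hcon
    push Not at hcon
    exact (hcon 0).2.1 ⟨(hcon 0).1, fun β => (hcon β).2.2⟩
  choose b hb using hbad
  let u : ℕ → Ordinal.{0} := fun k => (s0.2 k).getD 0
  let Low : G.State → Prop := fun s => ∀ k, s.2 k ∈ Lset u k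
  obtain ⟨B, hB⟩ := low_bdd (G := G) u b
  have low0 : Low s0 := by
    intro k
    cases e : s0.2 k with
    | none => exact Set.mem_insert _ _
    | some γ => refine Set.mem_insert_of_mem _ ⟨γ, ?_, rfl⟩; simp [u, e]
  have lowStep : ∀ s m s', Low s → G.Step s m s' → Low s' := by
    intro s m s' hl hs k
    rcases hs.2.le k with e | ⟨γ, γ0, hlt, e1, e2⟩
    · rw [e]; exact hl k
    · have := hl k
      rw [e2] at this
      rcases this with h | ⟨δ, hδ, e⟩
      · exact absurd h (by simp)
      · obtain rfl := Option.some.inj e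
        rw [e1]
        exact Set.mem_insert_of_mem _ ⟨γ, hlt.le.trans hδ, rfl⟩
  let βs := Order.succ B
  have hw : ∀ s : {s // Gd s}, Win (setC s.1 c βs) := fun s => s.2.2 βs
  choose σ k0 hk using hw
  let τ : G.Strat :=
    { Mem := Σ s : {s // Gd s}, (σ s).Mem
      mv := fun o => (σ o.1).mv o.2
      upd := fun o a b => if G.vis a.1 ((σ o.1).mv o.2) = some c then
          (if h : Gd b then ⟨⟨b, h⟩, k0 ⟨b, h⟩⟩ else o)
        else ⟨o.1, (σ o.1).upd o.2 (setC a c βs) (setC b c βs)⟩ }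
  have hg0 : Gd s0 := ⟨hc, h⟩
  refine ⟨τ, ⟨⟨s0, hg0⟩, k0 ⟨s0, hg0⟩⟩, ?_⟩
  intro f g f0 g0 hf hg
  have hinv : ∀ n, (f n).2 c = none ∧ Low (f n) ∧ WinM (σ (g n).1) (setC (f n) c βs) (g n).2 := by
    intro n
    induction n with
    | zero => rw [f0, g0]; exact ⟨hc, low0, hk _⟩
    | succ n ih =>
      obtain ⟨i1, i2, i3⟩ := ih
      have hs := hf n
      have hn : (f (n + 1)).2 c = none := (hs.2.none_iff c).mpr i1
      have hl := lowStep _ _ _ i2 hs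
      refine ⟨hn, hl, ?_⟩
      by_cases hv : G.vis (f n).1 ((σ (g n).1).mv (g n).2) = some c
      · have hgd : Gd (f (n + 1)) := by
          by_contra hng
          have hbn := hb _ hn hng
          apply hbn
          refine ⟨_, _, i3.step (s' := setC (f (n + 1)) c (b (f (n + 1)))) ⟨hs.1, ?_⟩⟩
          show AStep (G.vis (f n).1 ((σ (g n).1).mv (g n).2)) _ _
          have e := hs.2
          change AStep (G.vis (f n).1 ((σ (g n).1).mv (g n).2)) _ _ at e
          rw [hv] at e ⊢
          have e := e.eq_of_none i1
          simp only [AStep, setC, Function.update_self]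
          exact ⟨b (f (n + 1)), Order.lt_succ_of_le (hB _ hl), by rw [e]; simp⟩
        have e : g (n + 1) = ⟨⟨_, hgd⟩, k0 ⟨_, hgd⟩⟩ := by
          rw [hg]
          show (if _ then _ else _) = _
          rw [if_pos hv, dif_pos hgd]
        rw [e]
        exact hk _
      · have e : g (n + 1) =
            ⟨(g n).1, (σ (g n).1).upd (g n).2 (setC (f n) c βs) (setC (f (n + 1)) c βs)⟩ := by
          rw [hg]
          show (if _ then _ else _) = _
          rw [if_neg hv]
        rw [e]
        exact i3.step ⟨hs.1, hs.2.update hv βs⟩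
  by_cases hio : ∀ N, ∃ n, N ≤ n ∧ G.vis (f n).1 (τ.mv (g n)) = some c
  · exact G.visA _ (fun n => τ.mv (g n)) c (fun n => (hf n).1) hio
  · push Not at hio
    obtain ⟨N, hN⟩ := hio
    let k : ℕ → (σ (g N).1).Mem := fun n => Nat.rec (g N).2
      (fun n k => (σ (g N).1).upd k (setC (f (N + n)) c βs) (setC (f (N + n + 1)) c βs)) n
    have hgk : ∀ n, g (N + n) = ⟨(g N).1, k n⟩ := by
      intro n
      induction n with
      | zero => rfl
      | succ n ih =>
        rw [← add_assoc, hg (N + n)]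
        show (if _ then _ else _) = _
        rw [if_neg (hN (N + n) (by omega)), ih]
    have := (hinv N).2.2 (fun n => setC (f (N + n)) c βs) k rfl rfl
      (by intro n
          have h1 := hf (N + n)
          have h2 := hN (N + n) (by omega)
          rw [hgk] at h1 h2
          exact ⟨h1.1, h1.2.update h2 βs⟩)
      (fun n => rfl)
    exact tail_add _ N this

def GoodAt (k : ℕ) (s : G.State) : Prop :=
  ¬ Win s ∧ (∀ j, k ≤ j → s.2 j = none) ∧ (∀ j, j < k → s.2 j ≠ none)

theorem exists_next (k : ℕ) (s : G.State) (h : GoodAt k s) (m : G.Mv) :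
    ∃ s', GoodAt (k + 1) s' ∧ ∃ β, G.Step (setC s k β) m s' := by
  have h1 : ∃ β, ¬ Win (setC s k β) := by
    by_contra hcon
    push Not at hcon
    exact h.1 (win_of_ann s k (h.2.1 k le_rfl) hcon)
  obtain ⟨β, hβ⟩ := h1
  have h2 : ∃ s', G.Step (setC s k β) m s' ∧ ¬ Win s' := by
    by_contra hcon
    push Not at hcon
    exact hβ (win_of_move _ m hcon)
  obtain ⟨s', hs', hw⟩ := h2
  refine ⟨s', ⟨hw, ?_, ?_⟩, β, hs'⟩
  · intro j hj
    rw [hs'.2.none_iff]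
    simp only [setC]
    rw [Function.update_of_ne (by omega)]
    exact h.2.1 j (by omega)
  · intro j hj
    rw [Ne, hs'.2.none_iff]
    simp only [setC]
    by_cases hjk : j = k
    · subst hjk; simp
    · rw [Function.update_of_ne hjk]
      exact h.2.2 j (by omega)

theorem davis (p0 : G.P) (h : ¬ Win (G := G) (p0, fun _ => none)) :
    ∃ st : List G.Mv → G.P, st [] = p0 ∧ (∀ ms m, G.Resp (st ms) m (st (m :: ms))) ∧
      ∀ (hh : ℕ → List G.Mv) (mv : ℕ → G.Mv), (∀ n, hh (n + 1) = mv n :: hh n) →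
        ∀ c, ∃ N, ∀ n, N ≤ n → G.vis (st (hh n)) (mv n) ≠ some c := by
  choose nx hnx β hβ using exists_next (G := G)
  let S : (ms : List G.Mv) → {s : G.State // GoodAt ms.length s} := fun ms =>
    List.rec (motive := fun ms => {s : G.State // GoodAt ms.length s})
      ⟨(p0, fun _ => none), h, fun _ _ => rfl, fun j hj => absurd hj (Nat.not_lt_zero _)⟩
      (fun m ms s => ⟨nx ms.length s.1 s.2 m, hnx _ _ _ _⟩) ms
  have hS : ∀ ms m, ∃ β, G.Step (setC (S ms).1 ms.length β) m (S (m :: ms)).1 :=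
    fun ms m => ⟨_, hβ ms.length (S ms).1 (S ms).2 m⟩
  refine ⟨fun ms => (S ms).1.1, rfl, ?_, ?_⟩
  · intro ms m
    obtain ⟨β, hb⟩ := hS ms m
    exact hb.1
  · intro hh mv hstep c
    by_contra hcon
    push Not at hcon
    have hlen : ∀ n, n ≤ (hh n).length := by
      intro n
      induction n with
      | zero => exact Nat.zero_le _
      | succ n ih => rw [hstep]; simp; exact ih
    have hsome : ∀ n, c < n → ∃ γ, (S (hh n)).1.2 c = some γ := by
      intro n hn
      exact Option.ne_none_iff_exists'.mp ((S (hh n)).2.2.2 c (lt_of_lt_of_le hn (hlen n)))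
    let o : ℕ → Ordinal.{0} := fun n => ((S (hh n)).1.2 c).getD 0
    have ho : ∀ n, c < n → (S (hh n)).1.2 c = some (o n) := by
      intro n hn
      obtain ⟨γ, hγ⟩ := hsome n hn
      simp only [o, hγ]; rfl
    have hst : ∀ n, c < n → o (n + 1) ≤ o n ∧
        (G.vis (S (hh n)).1.1 (mv n) = some c → o (n + 1) < o n) := by
      intro n hn
      obtain ⟨β, hb⟩ := hS (hh n) (mv n)
      rw [← hstep] at hb
      have e1 : (setC (S (hh n)).1 (hh n).length β).2 c = some (o n) := by
        simp only [setC]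
        rw [Function.update_of_ne (by have := hlen n; omega)]
        exact ho n hn
      have e2 := ho (n + 1) (by omega)
      constructor
      · rcases hb.2.le c with e | ⟨γ, γ0, hlt, ea, eb⟩
        · rw [e1, e2] at e
          exact (Option.some.inj e).le
        · rw [e2] at ea
          rw [e1] at eb
          rw [Option.some.inj ea, Option.some.inj eb]
          exact hlt.le
      · intro hv
        have h2 := hb.2
        change AStep (G.vis (S (hh n)).1.1 (mv n)) _ _ at h2
        rw [hv] at h2
        obtain ⟨γ, hγ, e⟩ := h2.lt e1
        rw [e2] at e
        rw [Option.some.inj e]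
        exact hγ
    have hanti : ∀ n m, c < n → n ≤ m → o m ≤ o n := by
      intro n m hn hm
      induction hm with
      | refl => exact le_rfl
      | step hm ih => exact (hst _ (lt_of_lt_of_le hn hm)).1.trans ih
    let m0 := WellFounded.min (r := ((· < ·) : Ordinal.{0} → Ordinal → Prop)) wellFounded_lt
      {x | ∃ n, c < n ∧ o n = x} ⟨_, c + 1, by omega, rfl⟩
    have hm0 : m0 ∈ {x | ∃ n, c < n ∧ o n = x} := WellFounded.min_mem _ _ _
    obtain ⟨n1, hn1, e1⟩ := hm0
    obtain ⟨n, hn, hv⟩ := hcon n1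
    have h1 := (hst n (by omega)).2 hv
    have h2 := hanti n1 n hn1 hn
    have h3 : ¬ o (n + 1) < m0 :=
      WellFounded.not_lt_min wellFounded_lt _
        (show o (n + 1) ∈ {x | ∃ n, c < n ∧ o n = x} from ⟨n + 1, by omega, rfl⟩)
    rw [← e1] at h3
    exact h3 (lt_of_lt_of_le h1 h2)

end Davis


structure Ctx where
  Sb : Set Formula
  x0 : ℕ
  fin : Sb.Finite
  and1 : ∀ {A B}, Formula.and A B ∈ Sb → A ∈ Sb
  and2 : ∀ {A B}, Formula.and A B ∈ Sb → B ∈ Sb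
  or1 : ∀ {A B}, Formula.or A B ∈ Sb → A ∈ Sb
  or2 : ∀ {A B}, Formula.or A B ∈ Sb → B ∈ Sb
  imp1 : ∀ {A B}, Formula.imp A B ∈ Sb → A ∈ Sb
  imp2 : ∀ {A B}, Formula.imp A B ∈ Sb → B ∈ Sb
  box1 : ∀ {A}, Formula.box A ∈ Sb → A ∈ Sb
  dia1 : ∀ {A}, Formula.dia A ∈ Sb → A ∈ Sb

structure Pos where
  nx : ℕ
  rel : Set (ℕ × ℕ)
  left : Multiset LFormula
  right : Multiset LFormula
  comp : ℕ → ℕ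
  mks : ℕ → Set Formula

def Pos.seq (p : Pos) : Sequent := ⟨p.rel, p.left, p.right⟩

structure Inv (C : Ctx) (p : Pos) : Prop where
  pos : C.x0 < p.nx
  rel : ∀ a b, (a, b) ∈ p.rel → C.x0 ≤ a ∧ a < b ∧ b < p.nx ∧ p.mks a ⊆ p.mks b ∧
    (p.mks a = p.mks b → p.comp b = p.comp a)
  left : ∀ x B, (x, B) ∈ p.left → C.x0 ≤ x ∧ x < p.nx ∧ B ∈ C.Sb
  right : ∀ x B, (x, B) ∈ p.right → C.x0 ≤ x ∧ x < p.nx ∧ B ∈ C.Sb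
  comp : ∀ a, p.comp a ≤ a
  mks : ∀ a B, B ∈ p.mks a → Formula.box B ∈ C.Sb ∧
    ∃ z, Relation.ReflTransGen (fun a b => (a, b) ∈ p.rel) z a ∧ (z, Formula.box B) ∈ p.left

inductive Move
  | dec (x : ℕ) (B : Formula)
  | dia (x : ℕ) (B : Formula)
  | imp (x : ℕ) (B D : Formula)
  | box (x : ℕ) (B : Formula)
  | close

def Legal (C : Ctx) (p : Pos) : Move → Prop
  | .dec x B => C.x0 ≤ x ∧ x < p.nx ∧ B ∈ C.Sb
  | .dia x B => (x, Formula.dia B) ∈ p.left ∧ ∀ y, (x, y) ∈ p.rel → (y, B) ∉ p.left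
  | .imp x B D => (x, Formula.imp B D) ∈ p.right
  | .box x B => (x, Formula.box B) ∈ p.right ∧ B ∉ p.mks x
  | .close => Prov p.seq

def Pos.addR (p : Pos) (x : ℕ) (B : Formula) : Pos := { p with right := (x, B) ::ₘ p.right }
def Pos.addL (p : Pos) (x : ℕ) (B : Formula) : Pos := { p with left := (x, B) ::ₘ p.left }
def Pos.newDia (p : Pos) (x : ℕ) (B : Formula) : Pos where
  nx := p.nx + 1
  rel := insert (x, p.nx) p.rel
  left := (p.nx, B) ::ₘ p.left
  right := p.right
  comp := Function.update p.comp p.nx (p.comp x)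
  mks := Function.update p.mks p.nx (p.mks x)
def Pos.doImp (p : Pos) (x : ℕ) (B D : Formula) : Pos :=
  { p with left := (x, B) ::ₘ p.left, right := {(x, D)} }
def Pos.newBox (p : Pos) (x : ℕ) (B : Formula) : Pos where
  nx := p.nx + 1
  rel := insert (x, p.nx) p.rel
  left := (p.nx, Formula.box B) ::ₘ p.left
  right := {(p.nx, B)}
  comp := Function.update p.comp p.nx p.nx
  mks := Function.update p.mks p.nx (insert B (p.mks x))

def Reply (p : Pos) : Move → Pos → Prop
  | .dec x B, q => q = p.addR x B ∨ q = p.addL x B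
  | .dia x B, q => q = p.newDia x B
  | .imp x B D, q => q = p.doImp x B D
  | .box x B, q => q = p.newBox x B
  | .close, _ => False

def Resp (C : Ctx) (p : Pos) (m : Move) (q : Pos) : Prop :=
  (Legal C p m ∧ Reply p m q) ∨ (¬ Legal C p m ∧ q = p)

theorem Inv.addR {C : Ctx} {p : Pos} (hp : Inv C p) {x B} (h : C.x0 ≤ x ∧ x < p.nx ∧ B ∈ C.Sb) :
    Inv C (p.addR x B) := by
  refine ⟨hp.pos, hp.rel, hp.left, ?_, hp.comp, hp.mks⟩
  intro y D hy
  rcases Multiset.mem_cons.mp hy with e | hy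
  · cases e; exact h
  · exact hp.right _ _ hy

theorem Inv.addL {C : Ctx} {p : Pos} (hp : Inv C p) {x B} (h : C.x0 ≤ x ∧ x < p.nx ∧ B ∈ C.Sb) :
    Inv C (p.addL x B) := by
  refine ⟨hp.pos, hp.rel, ?_, hp.right, hp.comp, ?_⟩
  · intro y D hy
    rcases Multiset.mem_cons.mp hy with e | hy
    · cases e; exact h
    · exact hp.left _ _ hy
  · intro a D hD
    obtain ⟨h1, z, h2, h3⟩ := hp.mks a D hD
    exact ⟨h1, z, h2, Multiset.mem_cons_of_mem h3⟩

theorem Inv.doImp {C : Ctx} {p : Pos} (hp : Inv C p) {x B D} (h : (x, Formula.imp B D) ∈ p.right) :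
    Inv C (p.doImp x B D) := by
  obtain ⟨h1, h2, h3⟩ := hp.right _ _ h
  have := hp.addL (x := x) (B := B) ⟨h1, h2, C.imp1 h3⟩
  refine ⟨this.pos, this.rel, this.left, ?_, this.comp, this.mks⟩
  intro y E hy
  have e := Multiset.mem_singleton.mp hy
  cases e
  exact ⟨h1, h2, C.imp2 h3⟩

theorem inv_new {C : Ctx} {p q : Pos} (hp : Inv C p) (x : ℕ) (D : Formula) (c : ℕ) (M : Set Formula)
    (hx : C.x0 ≤ x ∧ x < p.nx) (hD : D ∈ C.Sb) (hc : c ≤ p.nx) (hM : p.mks x ⊆ M)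
    (hMc : p.mks x = M → c = p.comp x)
    (hMb : ∀ B ∈ M, B ∈ p.mks x ∨ D = Formula.box B)
    (e1 : q.nx = p.nx + 1) (e2 : q.rel = insert (x, p.nx) p.rel)
    (e3 : q.left = (p.nx, D) ::ₘ p.left) (e4 : q.comp = Function.update p.comp p.nx c)
    (e5 : q.mks = Function.update p.mks p.nx M)
    (e6 : ∀ x B, (x, B) ∈ q.right → C.x0 ≤ x ∧ x < q.nx ∧ B ∈ C.Sb) : Inv C q := by
  have hpos := hp.pos
  refine ⟨by omega, ?_, ?_, e6, ?_, ?_⟩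
  · intro a b hab
    rw [e2] at hab
    rw [e1, e4, e5]
    rcases hab with e | hab
    · cases e
      refine ⟨hx.1, hx.2, by omega, ?_⟩
      rw [Function.update_self, Function.update_self, Function.update_of_ne (by omega),
        Function.update_of_ne (by omega)]
      exact ⟨hM, hMc⟩
    · obtain ⟨h1, h2, h3, h4⟩ := hp.rel a b hab
      refine ⟨h1, h2, by omega, ?_⟩
      rw [Function.update_of_ne (by omega), Function.update_of_ne (by omega),
        Function.update_of_ne (by omega), Function.update_of_ne (by omega)]
      exact h4
  · intro y E hy
    rw [e3] at hy
    rw [e1]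
    rcases Multiset.mem_cons.mp hy with e | hy
    · cases e; exact ⟨by omega, by omega, hD⟩
    · have := hp.left _ _ hy
      exact ⟨this.1, by omega, this.2.2⟩
  · intro a
    rw [e4]
    by_cases h : a = p.nx
    · subst h; simpa using hc
    · rw [Function.update_of_ne h]; exact hp.comp a
  · have key : ∀ a B, B ∈ p.mks a → Formula.box B ∈ C.Sb ∧
      ∃ z, Relation.ReflTransGen (fun a b => (a, b) ∈ q.rel) z a ∧ (z, Formula.box B) ∈ q.left := by
      intro a B hB
      obtain ⟨h1, z, h2, h3⟩ := hp.mks a B hB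
      refine ⟨h1, z, Relation.ReflTransGen.mono ?_ _ _ h2, ?_⟩
      · intro u v huv; rw [e2]; exact Set.mem_insert_of_mem _ huv
      · rw [e3]; exact Multiset.mem_cons_of_mem h3
    intro a B hB
    rw [e5] at hB
    by_cases h : a = p.nx
    · subst h
      rw [Function.update_self] at hB
      rcases hMb B hB with h | h
      · obtain ⟨h1, z, h2, h3⟩ := key x B h
        refine ⟨h1, z, h2.tail ?_, h3⟩
        rw [e2]; exact Set.mem_insert _ _
      · subst h
        refine ⟨hD, p.nx, Relation.ReflTransGen.refl, ?_⟩
        rw [e3]; exact Multiset.mem_cons_self _ _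
    · rw [Function.update_of_ne h] at hB
      exact key a B hB

theorem Inv.newDia {C : Ctx} {p : Pos} (hp : Inv C p) {x B} (h : (x, Formula.dia B) ∈ p.left) :
    Inv C (p.newDia x B) := by
  obtain ⟨h1, h2, h3⟩ := hp.left _ _ h
  refine inv_new hp x B (p.comp x) (p.mks x) ⟨h1, h2⟩ (C.dia1 h3) ?_ subset_rfl (fun _ => rfl)
    (fun _ h => Or.inl h) rfl rfl rfl rfl rfl ?_
  · have := hp.comp x; omega
  · intro y D hy
    have := hp.right _ _ hy
    exact ⟨this.1, Nat.lt_succ_of_lt this.2.1, this.2.2⟩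

theorem Inv.newBox {C : Ctx} {p : Pos} (hp : Inv C p) {x B} (h : (x, Formula.box B) ∈ p.right)
    (hB : B ∉ p.mks x) : Inv C (p.newBox x B) := by
  obtain ⟨h1, h2, h3⟩ := hp.right _ _ h
  refine inv_new hp x B.box p.nx (insert B (p.mks x)) ⟨h1, h2⟩ h3 le_rfl (Set.subset_insert _ _)
    ?_ ?_ rfl rfl rfl rfl rfl ?_
  · intro e
    exact absurd (by rw [e]; exact Set.mem_insert _ _) hB
  · rintro D (rfl | hD)
    · exact Or.inr rfl
    · exact Or.inl hD
  · intro y D hy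
    have e := Multiset.mem_singleton.mp hy
    cases e
    exact ⟨hp.pos.le, Nat.lt_succ_self _, C.box1 h3⟩

theorem Resp.inv {C : Ctx} {p q : Pos} {m : Move} (hp : Inv C p) (h : Resp C p m q) : Inv C q := by
  rcases h with ⟨hl, hr⟩ | ⟨_, rfl⟩
  · cases m with
    | dec x B =>
      rcases hr with rfl | rfl
      · exact hp.addR hl
      · exact hp.addL hl
    | dia x B => cases hr; exact hp.newDia hl.1
    | imp x B D => cases hr; exact hp.doImp hl
    | box x B => cases hr; exact hp.newBox hl.1 hl.2
    | close => exact hr.elim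
  · exact hp

structure Pos.Le (p q : Pos) : Prop where
  nx : p.nx ≤ q.nx
  rel : p.rel ⊆ q.rel
  left : ∀ a ∈ p.left, a ∈ q.left
  comp : ∀ a, a < p.nx → q.comp a = p.comp a
  mks : ∀ a, a < p.nx → q.mks a = p.mks a

theorem Pos.Le.refl (p : Pos) : p.Le p :=
  ⟨le_rfl, subset_rfl, fun _ h => h, fun _ _ => rfl, fun _ _ => rfl⟩

theorem Pos.Le.trans {p q r : Pos} (h : p.Le q) (h' : q.Le r) : p.Le r :=
  ⟨h.nx.trans h'.nx, h.rel.trans h'.rel, fun a ha => h'.left a (h.left a ha),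
    fun a ha => (h'.comp a (lt_of_lt_of_le ha h.nx)).trans (h.comp a ha),
    fun a ha => (h'.mks a (lt_of_lt_of_le ha h.nx)).trans (h.mks a ha)⟩

theorem Resp.le {C : Ctx} {p q : Pos} {m : Move} (h : Resp C p m q) : p.Le q := by
  rcases h with ⟨hl, hr⟩ | ⟨_, rfl⟩
  · cases m with
    | dec x B =>
      rcases hr with rfl | rfl
      · exact ⟨le_rfl, subset_rfl, fun _ h => h, fun _ _ => rfl, fun _ _ => rfl⟩
      · exact ⟨le_rfl, subset_rfl, fun _ h => Multiset.mem_cons_of_mem h,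
          fun _ _ => rfl, fun _ _ => rfl⟩
    | dia x B =>
      cases hr
      exact ⟨Nat.le_succ _, Set.subset_insert _ _, fun _ h => Multiset.mem_cons_of_mem h,
        fun a ha => Function.update_of_ne (Nat.ne_of_lt ha) _ _,
        fun a ha => Function.update_of_ne (Nat.ne_of_lt ha) _ _⟩
    | imp x B D =>
      cases hr
      exact ⟨le_rfl, subset_rfl, fun _ h => Multiset.mem_cons_of_mem h,
          fun _ _ => rfl, fun _ _ => rfl⟩
    | box x B =>
      cases hr
      exact ⟨Nat.le_succ _, Set.subset_insert _ _, fun _ h => Multiset.mem_cons_of_mem h,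
        fun a ha => Function.update_of_ne (Nat.ne_of_lt ha) _ _,
        fun a ha => Function.update_of_ne (Nat.ne_of_lt ha) _ _⟩
    | close => exact hr.elim
  · exact Pos.Le.refl _

/-- a move either creates no label or is a legal dia or box move -/
theorem Resp.nx_cases {C : Ctx} {p q : Pos} {m : Move} (h : Resp C p m q) :
    q.nx = p.nx ∨ (∃ x B, m = .dia x B ∧ Legal C p (.dia x B) ∧ q = p.newDia x B) ∨
      (∃ x B, m = .box x B ∧ Legal C p (.box x B) ∧ q = p.newBox x B) := by
  rcases h with ⟨hl, hr⟩ | ⟨_, rfl⟩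
  · cases m with
    | dec x B => rcases hr with rfl | rfl <;> exact Or.inl rfl
    | dia x B => exact Or.inr (Or.inl ⟨x, B, rfl, hl, hr⟩)
    | imp x B D => cases hr; exact Or.inl rfl
    | box x B => exact Or.inr (Or.inr ⟨x, B, rfl, hl, hr⟩)
    | close => exact hr.elim
  · exact Or.inl rfl

theorem inv_fresh {C : Ctx} {p : Pos} (hp : Inv C p) : Fresh p.nx p.seq := by
  rintro ((⟨w, h1 | h1⟩ | ⟨A, h1⟩) | ⟨A, h1⟩)
  · have := hp.rel _ _ h1; omega
  · have := hp.rel _ _ h1; omega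
  · have := hp.left _ _ h1; omega
  · have := hp.right _ _ h1; omega

theorem emac_move {C : Ctx} {p : Pos} (hp : Inv C p) (m : Move) (L : Sequent → Prop)
    (hL : ∀ q, Resp C p m q → L q.seq) : EMac p.rel L p.seq := by
  have hQ := clo_emac p.rel L
  by_cases hl : Legal C p m
  · have hL' : ∀ q, Reply p m q → EMac p.rel L q.seq :=
      fun q hq => EMac.leaf (hL q (Or.inl ⟨hl, hq⟩))
    cases m with
    | dec x B =>
      exact hQ.cut subset_rfl x B (hL' _ (Or.inl rfl)) (hL' _ (Or.inr rfl))
    | dia x B =>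
      exact hQ.diaL subset_rfl x p.nx B hl.1 (inv_fresh hp) (hL' _ rfl)
    | imp x B D =>
      exact hQ.impR subset_rfl x B D hl (hL' _ rfl)
    | box x B =>
      have hB := hl.1
      refine hQ.sub subset_rfl (Γ := p.left) (Δ := {(x, B.box)}) (fun _ h => h)
        (by simpa using hB) ?_
      have hf : Fresh p.nx ⟨p.rel, p.left, p.right⟩ := inv_fresh hp
      refine hQ.cut subset_rfl x (Formula.imp B.box B).box ?_ ?_
      · refine hQ.boxR subset_rfl x p.nx (Formula.imp B.box B) (by simp) ?_ ?_
        · have hxn := (hp.right _ _ hB).2.1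
          rintro ((h1 | ⟨A, h1⟩) | ⟨A, h1⟩)
          · exact hf (Or.inl (Or.inl h1))
          · exact hf (Or.inl (Or.inr ⟨A, h1⟩))
          · simp at h1; omega
        · have hs : p.rel ⊆ insert (x, p.nx) p.rel := Set.subset_insert _ _
          refine hQ.impR hs p.nx B.box B (by simp) ?_
          exact hL' _ rfl
      · refine EMac.closed ?_
        refine clo_prov.sub (Set.empty_subset _) ?_ ?_ (Prov.lob x B p.rel) <;> simp
    | close => exact EMac.closed hl
  · exact EMac.leaf (hL p (Or.inr ⟨hl, rfl⟩))

open Classical in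
noncomputable def visOf (C : Ctx) (p : Pos) : Move → Option ℕ
  | .dia x B => if Legal C p (.dia x B) then some (p.comp x) else none
  | _ => none

theorem visOf_eq {C : Ctx} {p : Pos} {m : Move} {c : ℕ} (h : visOf C p m = some c) :
    ∃ x B, m = .dia x B ∧ Legal C p (.dia x B) ∧ p.comp x = c := by
  cases m with
  | dia x B =>
    simp only [visOf] at h
    split_ifs at h with hl
    exact ⟨x, B, rfl, hl, Option.some.inj h⟩
  | _ => simp [visOf] at h

theorem le_of_steps {C : Ctx} {p : ℕ → Pos} {ms : ℕ → Move}
    (hs : ∀ n, Resp C (p n) (ms n) (p (n + 1))) (n m : ℕ) (h : n ≤ m) : (p n).Le (p m) := by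
  induction h with
  | refl => exact Pos.Le.refl _
  | step _ ih => exact ih.trans (hs _).le

theorem nx_step {C : Ctx} {p q : Pos} {m : Move} (h : Resp C p m q) :
    q.nx = p.nx ∨ q.nx = p.nx + 1 := by
  rcases h.nx_cases with h | ⟨x, B, _, _, rfl⟩ | ⟨x, B, _, _, rfl⟩
  · exact Or.inl h
  · exact Or.inr rfl
  · exact Or.inr rfl

theorem exists_creation {C : Ctx} {p : ℕ → Pos} {ms : ℕ → Move}
    (hs : ∀ n, Resp C (p n) (ms n) (p (n + 1))) (n y : ℕ) (h0 : (p 0).nx ≤ y) (h1 : y < (p n).nx) :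
    ∃ k, k < n ∧ (p k).nx = y ∧ (p (k + 1)).nx = y + 1 := by
  induction n with
  | zero => omega
  | succ n ih =>
    by_cases h : y < (p n).nx
    · obtain ⟨k, hk, h2⟩ := ih h
      exact ⟨k, by omega, h2⟩
    · have := nx_step (hs n)
      exact ⟨n, by omega, by omega, by omega⟩

theorem acc_desc_finite {α : Type*} (E : α → α → Prop) (hfin : ∀ x, {y | E x y}.Finite) (x : α)
    (h : Acc (fun y x => E x y) x) : {y | Relation.ReflTransGen E x y}.Finite := by
  induction h with
  | intro x _ ih =>
    have : {y | Relation.ReflTransGen E x y} ⊆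
        {x} ∪ ⋃ y ∈ {y | E x y}, {z | Relation.ReflTransGen E y z} := by
      intro z hz
      rcases Relation.ReflTransGen.cases_head hz with rfl | ⟨y, h1, h2⟩
      · exact Or.inl rfl
      · right
        simp only [Set.mem_iUnion]
        exact ⟨y, h1, h2⟩
    exact Set.Finite.subset ((Set.finite_singleton x).union
      (Set.Finite.biUnion (hfin x) (fun y hy => ih y hy))) this

theorem vis_progress {C : Ctx} {p : ℕ → Pos} {ms : ℕ → Move} (hi : ∀ n, Inv C (p n))
    (hs : ∀ n, Resp C (p n) (ms n) (p (n + 1))) (c : ℕ)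
    (hv : ∀ N, ∃ n, N ≤ n ∧ visOf C (p n) (ms n) = some c) :
    ∃ d : ℕ → ℕ, ∀ k, ∃ N, ∀ n, N ≤ n → (d k, d (k + 1)) ∈ (p n).rel := by
  let E : ℕ → ℕ → Prop := fun x y => ∃ n B, ms n = .dia x B ∧ Legal C (p n) (.dia x B) ∧
    y = (p n).nx
  have hEr : ∀ n x B, ms n = .dia x B → Legal C (p n) (.dia x B) →
      p (n + 1) = (p n).newDia x B := by
    intro n x B h1 h2
    rcases hs n with ⟨_, hr⟩ | ⟨hn, _⟩
    · rw [h1] at hr; exact hr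
    · rw [h1] at hn; exact absurd h2 hn
  have hfin : ∀ x, {y | E x y}.Finite := by
    intro x
    have h1 : ∀ y : {y | E x y}, ∃ B, ∃ n, ms n = .dia x B ∧ Legal C (p n) (.dia x B) ∧
        y.1 = (p n).nx := by
      rintro ⟨y, n, B, h⟩; exact ⟨B, n, h⟩
    choose F n hF1 hF2 hF3 using h1
    have hmem : ∀ y, F y ∈ C.Sb := fun y => C.dia1 ((hi (n y)).left _ _ (hF2 y).1).2.2
    have key : ∀ y z, F y = F z → n y < n z → False := by
      intro y z e hlt
      have h2 := (hF2 z).2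
      have hle := le_of_steps hs (n y + 1) (n z) hlt
      have e1 := hEr _ _ _ (hF1 y) (hF2 y)
      refine h2 (p (n y)).nx (hle.rel ?_) (hle.left _ ?_)
      · rw [e1]; exact Set.mem_insert _ _
      · rw [e1, ← e]; exact Multiset.mem_cons_self _ _
    have hinj : Function.Injective (fun y => (⟨F y, hmem y⟩ : C.Sb)) := by
      intro y z e
      have e : F y = F z := congrArg Subtype.val e
      rcases lt_trichotomy (n y) (n z) with h | h | h
      · exact (key y z e h).elim
      · apply Subtype.ext; rw [hF3, hF3, h]
      · exact (key z y e.symm h).elim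
    haveI := C.fin.to_subtype
    exact Set.finite_coe_iff.mp (Finite.of_injective _ hinj)
  have hroot : ∀ y n, y < (p n).nx → (p n).comp y = c →
      ∃ r, (r < (p 0).nx ∨ r = c) ∧ Relation.ReflTransGen E r y := by
    intro y
    induction y using Nat.strong_induction_on with
    | _ y ih =>
      intro n hn hc
      by_cases h0 : y < (p 0).nx
      · exact ⟨y, Or.inl h0, Relation.ReflTransGen.refl⟩
      · obtain ⟨k, hk, h1, h2⟩ := exists_creation hs n y (by omega) hn
        have hle := le_of_steps hs (k + 1) n hk
        have hc' : (p (k + 1)).comp y = c := by rw [← hle.comp y (by omega)]; exact hc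
        rcases (hs k).nx_cases with h | ⟨x, B, e1, e2, e3⟩ | ⟨x, B, e1, e2, e3⟩
        · omega
        · have hx := ((hi k).left _ _ e2.1).2.1
          rw [e3] at hc'
          simp only [Pos.newDia, h1, Function.update_self] at hc'
          obtain ⟨r, hr1, hr2⟩ := ih x (by omega) k hx hc'
          exact ⟨r, hr1, hr2.tail ⟨k, B, e1, e2, h1.symm⟩⟩
        · rw [e3] at hc'
          simp only [Pos.newBox, h1, Function.update_self] at hc'
          exact ⟨y, Or.inr hc', Relation.ReflTransGen.refl⟩
  have hex : ∃ r, ¬ Acc (fun y x => E x y) r := by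
    by_contra hcon
    push Not at hcon
    have hf : (⋃ r ∈ ({r | r < (p 0).nx} ∪ {c} : Set ℕ),
        {y | Relation.ReflTransGen E r y}).Finite :=
      Set.Finite.biUnion ((Set.finite_lt_nat _).union (Set.finite_singleton c))
        (fun r _ => acc_desc_finite E hfin r (hcon r))
    obtain ⟨M, hM⟩ := hf.bddAbove
    -- the counter grows unboundedly
    have hgrow : ∀ k, ∃ n, k ≤ (p n).nx := by
      intro k
      induction k with
      | zero => exact ⟨0, Nat.zero_le _⟩
      | succ k ih =>
        obtain ⟨n, hn⟩ := ih
        obtain ⟨n', hn', hv'⟩ := hv n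
        obtain ⟨x, B, e1, e2, e3⟩ := visOf_eq hv'
        have h1 := (le_of_steps hs n n' hn').nx
        refine ⟨n' + 1, ?_⟩
        rw [hEr _ _ _ e1 e2]
        simp only [Pos.newDia]; omega
    obtain ⟨n, hn⟩ := hgrow (M + 1)
    obtain ⟨n', hn', hv'⟩ := hv n
    obtain ⟨x, B, e1, e2, e3⟩ := visOf_eq hv'
    have h1 := (le_of_steps hs n n' hn').nx
    have e4 := hEr _ _ _ e1 e2
    obtain ⟨r, hr1, hr2⟩ := hroot (p n').nx (n' + 1) (by rw [e4]; simp [Pos.newDia])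
      (by rw [e4]; simp [Pos.newDia, e3])
    have : (p n').nx ≤ M := hM (by
      simp only [Set.mem_iUnion]
      exact ⟨r, hr1, hr2⟩)
    omega
  obtain ⟨r, hr⟩ := hex
  obtain ⟨d, _, hd⟩ := not_acc_iff_exists_descending_chain.mp hr
  refine ⟨d, fun k => ?_⟩
  obtain ⟨n, B, e1, e2, e3⟩ := hd k
  refine ⟨n + 1, fun i hi => (le_of_steps hs _ _ hi).rel ?_⟩
  rw [hEr _ _ _ e1 e2, e3]
  exact Set.mem_insert _ _

noncomputable def theGame (C : Ctx) : Davis.Game where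
  P := {p // Inv C p}
  Mv := Move
  Resp p m q := Resp C p.1 m q.1
  vis p m := visOf C p.1 m
  A f := ∃ d : ℕ → ℕ, ∀ k, ∃ N, ∀ n, N ≤ n → (d k, d (k + 1)) ∈ (f n).1.rel
  tail := by
    intro f
    constructor
    · rintro ⟨d, hd⟩
      refine ⟨d, fun k => ?_⟩
      obtain ⟨N, hN⟩ := hd k
      refine ⟨N + 1, fun n hn => ?_⟩
      have : (d k, d (k + 1)) ∈ (f (n - 1 + 1)).1.rel := hN (n - 1) (by omega)
      rwa [Nat.sub_add_cancel (by omega)] at this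
    · rintro ⟨d, hd⟩
      refine ⟨d, fun k => ?_⟩
      obtain ⟨N, hN⟩ := hd k
      exact ⟨N, fun n hn => hN (n + 1) (by omega)⟩
  visA := fun f ms c h1 h2 => vis_progress (fun n => (f n).2) h1 c h2

theorem prov_of_win {C : Ctx} (p0 : {p // Inv C p})
    (h : Davis.Win (G := theGame C) (p0, fun _ => none)) : Prov p0.1.seq := by
  obtain ⟨σ, m0, hw⟩ := h
  let em : {p // Inv C p} → (theGame C).State := fun p => (p, fun _ => none)
  refine infproof_of_macro (T := {p // Inv C p} × σ.Mem) (fun t => t.1.1.seq)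
    (fun s t => Resp C s.1.1 (σ.mv s.2) t.1.1 ∧ t.2 = σ.upd s.2 (em s.1) (em t.1))
    (p0, m0) ?_ ?_ ?_
  · intro s t hst
    exact hst.1.le.rel
  · intro s
    refine emac_move s.1.2 (σ.mv s.2) _ ?_
    intro q hq
    exact ⟨(⟨q, hq.inv s.1.2⟩, σ.upd s.2 (em s.1) (em ⟨q, hq.inv s.1.2⟩)), ⟨hq, rfl⟩, rfl⟩
  · intro f f0 hf
    obtain ⟨d, hd⟩ := hw (fun n => em (f n).1) (fun n => (f n).2) (by simp only [f0]; rfl)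
      (by simp only [f0]) (fun n => ⟨(hf n).1, by
        show Davis.AStep _ (fun _ => none) (fun _ => none)
        unfold Davis.AStep
        split <;> simp⟩) (fun n => (hf n).2)
    refine ⟨d, fun k => ?_⟩
    obtain ⟨N, hN⟩ := hd k
    exact ⟨N, hN N le_rfl⟩



structure Str (C : Ctx) where
  st : List Move → Pos
  inv : ∀ ms, Inv C (st ms)
  resp : ∀ ms m, Resp C (st ms) m (st (m :: ms))
  vis : ∀ (hh : ℕ → List Move) (mv : ℕ → Move), (∀ n, hh (n + 1) = mv n :: hh n) →
        ∀ c, ∃ N, ∀ n, N ≤ n → visOf C (st (hh n)) (mv n) ≠ some c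

theorem Str.notProv {C : Ctx} (S : Str C) (ms : List Move) : ¬ Prov (S.st ms).seq := by
  intro h
  rcases S.resp ms .close with ⟨_, h2⟩ | ⟨h1, _⟩
  · exact h2
  · exact h1 h

theorem Str.le {C : Ctx} (S : Str C) {ms ms' : List Move} (h : ms <:+ ms') :
    (S.st ms).Le (S.st ms') := by
  obtain ⟨t, rfl⟩ := h
  induction t with
  | nil => exact Pos.Le.refl _
  | cons m t ih => exact ih.trans (S.resp _ m).le

theorem Str.nx_le {C : Ctx} (S : Str C) (ms : List Move) :
    (S.st ms).nx ≤ (S.st []).nx + ms.length := by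
  induction ms with
  | nil => simp
  | cons m t ih =>
    have := nx_step (S.resp t m)
    simp only [List.length_cons]
    omega

structure Sat (C : Ctx) (p : Pos) : Prop where
  dec : ∀ x B, C.x0 ≤ x → x < p.nx → B ∈ C.Sb → (x, B) ∈ p.left ∨ (x, B) ∈ p.right
  dia : ∀ x B, (x, Formula.dia B) ∈ p.left → ∃ y, (x, y) ∈ p.rel ∧ (y, B) ∈ p.left

def Useful (C : Ctx) (p : Pos) (m : Move) : Prop :=
  (∃ x B, m = .dec x B ∧ Legal C p (.dec x B) ∧ (x, B) ∉ p.left ∧ (x, B) ∉ p.right) ∨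
  (∃ x B, m = .dia x B ∧ Legal C p (.dia x B))

theorem exists_useful {C : Ctx} {p : Pos} (h : ¬ Sat C p) : ∃ m, Useful C p m := by
  by_contra hc
  apply h
  constructor
  · intro x B h1 h2 h3
    by_contra hn
    push Not at hn
    exact hc ⟨_, Or.inl ⟨x, B, rfl, ⟨h1, h2, h3⟩, hn⟩⟩
  · intro x B h1
    by_contra hn
    push Not at hn
    exact hc ⟨_, Or.inr ⟨x, B, rfl, h1, hn⟩⟩

theorem Useful.right {C : Ctx} {p q : Pos} {m : Move} (h : Useful C p m) (hr : Resp C p m q) :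
    ∀ a ∈ p.right, a ∈ q.right := by
  rcases h with ⟨x, B, rfl, hl, _⟩ | ⟨x, B, rfl, hl⟩
  · rcases hr with ⟨_, rfl | rfl⟩ | ⟨h, _⟩
    · exact fun a ha => Multiset.mem_cons_of_mem ha
    · exact fun a ha => ha
    · exact absurd hl h
  · rcases hr with ⟨_, rfl⟩ | ⟨h, _⟩
    · exact fun a ha => ha
    · exact absurd hl h

def undec (C : Ctx) (p : Pos) : Set LFormula :=
  {a | (C.x0 ≤ a.1 ∧ a.1 < p.nx ∧ a.2 ∈ C.Sb) ∧ a ∉ p.left ∧ a ∉ p.right}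

theorem undec_finite (C : Ctx) (p : Pos) : (undec C p).Finite := by
  refine ((Set.finite_lt_nat p.nx).prod C.fin).subset ?_
  rintro ⟨x, B⟩ h
  exact ⟨h.1.2.1, h.1.2.2⟩

theorem no_useful_play {C : Ctx} {p : ℕ → Pos} {ms : ℕ → Move} (hi : ∀ n, Inv C (p n))
    (hs : ∀ n, Resp C (p n) (ms n) (p (n + 1))) (hu : ∀ n, Useful C (p n) (ms n))
    (hv : ∀ c, ∃ N, ∀ n, N ≤ n → visOf C (p n) (ms n) ≠ some c) : False := by
  have hcomp : ∀ n y, y < (p n).nx → (p n).comp y < (p 0).nx := by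
    intro n
    induction n with
    | zero => intro y hy; exact lt_of_le_of_lt ((hi 0).comp y) hy
    | succ n ih =>
      intro y hy
      have hle := (hs n).le
      by_cases hy' : y < (p n).nx
      · rw [hle.comp y hy']; exact ih y hy'
      · rcases (hs n).nx_cases with h | ⟨x, B, e1, e2, e3⟩ | ⟨x, B, e1, e2, e3⟩
        · omega
        · have : y = (p n).nx := by rw [e3] at hy; simp only [Pos.newDia] at hy; omega
          subst this
          rw [e3]
          simp only [Pos.newDia, Function.update_self]
          exact ih x ((hi n).left _ _ e2.1).2.1
        · rcases hu n with ⟨_, _, h, _⟩ | ⟨_, _, h, _⟩ <;> rw [e1] at h <;> cases h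
  choose N hN using hv
  let M := (Finset.range (p 0).nx).sup N
  have hdec : ∀ n, M ≤ n → (undec C (p (n + 1))).ncard + 1 ≤ (undec C (p n)).ncard := by
    intro n hn
    rcases hu n with ⟨x, B, e, hl, h1, h2⟩ | ⟨x, B, e, hl⟩
    · have hr : p (n + 1) = (p n).addR x B ∨ p (n + 1) = (p n).addL x B := by
        have := hs n
        rw [e] at this
        rcases this with ⟨_, h⟩ | ⟨h, _⟩
        · exact h
        · exact absurd hl h
      refine Set.ncard_lt_ncard ?_ (undec_finite C _)
      refine ⟨?_, fun hsub => ?_⟩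
      · rintro a ⟨ha1, ha2, ha3⟩
        rcases hr with hr | hr <;> rw [hr] at ha1 ha2 ha3
        · exact ⟨ha1, ha2, fun h => ha3 (Multiset.mem_cons_of_mem h)⟩
        · exact ⟨ha1, fun h => ha2 (Multiset.mem_cons_of_mem h), ha3⟩
      · have : (x, B) ∈ undec C (p (n + 1)) := hsub ⟨hl, h1, h2⟩
        rcases hr with hr | hr <;> rw [hr] at this
        · exact this.2.2 (Multiset.mem_cons_self _ _)
        · exact this.2.1 (Multiset.mem_cons_self _ _)
    · exfalso
      have hc := hcomp n x ((hi n).left _ _ hl.1).2.1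
      refine hN ((p n).comp x) n ?_ ?_
      · exact le_trans (Finset.le_sup (f := N) (Finset.mem_range.mpr hc)) hn
      · rw [e]; simp only [visOf]; rw [if_pos hl]
  have hk : ∀ k, (undec C (p (M + k))).ncard + k ≤ (undec C (p M)).ncard := by
    intro k
    induction k with
    | zero => exact le_rfl
    | succ k ih =>
      have := hdec (M + k) (by omega)
      rw [show M + (k + 1) = M + k + 1 from rfl]
      omega
  have := hk ((undec C (p M)).ncard + 1)
  omega

theorem Str.saturate {C : Ctx} (S : Str C) (ms : List Move) :
    ∃ ms', ms <:+ ms' ∧ Sat C (S.st ms') ∧ ∀ a ∈ (S.st ms).right, a ∈ (S.st ms').right := by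
  by_contra hc
  let T := {ms' // ms <:+ ms' ∧ ∀ a ∈ (S.st ms).right, a ∈ (S.st ms').right}
  have h1 : ∀ t : T, ∃ m, Useful C (S.st t.1) m := fun t =>
    exists_useful fun hs => hc ⟨t.1, t.2.1, hs, t.2.2⟩
  choose F hF using h1
  let nxt : T → T := fun t => ⟨F t :: t.1, t.2.1.trans (List.suffix_cons _ _),
    fun a ha => (hF t).right (S.resp _ _) a (t.2.2 a ha)⟩
  let t : ℕ → T := fun n => Nat.rec ⟨ms, List.suffix_rfl, fun _ h => h⟩ (fun _ t => nxt t) n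
  exact no_useful_play (C := C) (p := fun n => S.st (t n).1) (ms := fun n => F (t n))
    (fun n => S.inv _) (fun n => S.resp _ _) (fun n => hF _)
    (S.vis (fun n => (t n).1) (fun n => F (t n)) (fun n => rfl))

theorem transGen_inv {C : Ctx} {p : Pos} (hp : Inv C p) {a b : ℕ}
    (h : Relation.TransGen (fun a b => (a, b) ∈ p.rel) a b) :
    C.x0 ≤ a ∧ a < b ∧ b < p.nx ∧ p.mks a ⊆ p.mks b ∧
    (p.mks a = p.mks b → p.comp b = p.comp a) := by
  induction h with
  | single h => exact hp.rel _ _ h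
  | tail _ h ih =>
    obtain ⟨h1, h2, h3, h4, h5⟩ := ih
    obtain ⟨k1, k2, k3, k4, k5⟩ := hp.rel _ _ h
    refine ⟨h1, by omega, k3, h4.trans k4, fun e => ?_⟩
    rw [k5 (subset_antisymm k4 (e ▸ h4)), h5 (subset_antisymm h4 (e.symm ▸ k4))]

theorem mono_stab {α : Type*} {F : Set α} (hF : F.Finite) (M : ℕ → Set α) (hM : ∀ n, M n ⊆ F)
    (hm : ∀ n, M n ⊆ M (n + 1)) : ∃ N, ∀ n, N ≤ n → M n = M N := by
  have hmono : Monotone M := monotone_nat_of_le_succ hm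
  have hb : BddAbove (Set.range fun n => (M n).ncard) :=
    ⟨F.ncard, by rintro _ ⟨n, rfl⟩; exact Set.ncard_le_ncard (hM n) hF⟩
  obtain ⟨N, hN⟩ := Nat.sSup_mem (Set.range_nonempty fun n => (M n).ncard) hb
  refine ⟨N, fun n hn => (Set.eq_of_subset_of_ncard_le (hmono hn) ?_ (hF.subset (hM n))).symm⟩
  have h1 := le_csSup hb ⟨n, rfl⟩
  rw [← hN] at h1
  exact h1

theorem thread {α : Type*} (f : ℕ → List α) (hf : ∀ n, f n <:+ f (n + 1))
    (hl : ∀ k, ∃ n, k ≤ (f n).length) :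
    ∃ (hh : ℕ → List α) (mv : ℕ → α), (∀ n, hh (n + 1) = mv n :: hh n) ∧
      ∀ n, hh (f n).length = f n := by
  have hmono : ∀ m n, m ≤ n → f m <:+ f n := by
    intro m n h
    induction h with
    | refl => exact List.suffix_rfl
    | step _ ih => exact ih.trans (hf _)
  choose k hk using hl
  let hh : ℕ → List α := fun n => (f (k n)).drop ((f (k n)).length - n)
  have hs : ∀ n, hh n <:+ f (k n) := fun n => List.drop_suffix _ _
  have hlen : ∀ n, (hh n).length = n := by
    intro n; have := hk n; simp only [hh, List.length_drop]; omega
  have hsuf : ∀ n, hh n <:+ hh (n + 1) := by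
    intro n
    refine List.suffix_of_suffix_length_le ((hs n).trans (hmono _ (max (k n) (k (n + 1)))
      (le_max_left _ _))) ((hs (n + 1)).trans (hmono _ _ (le_max_right _ _))) ?_
    rw [hlen, hlen]; omega
  have hm : ∀ n, ∃ m, hh (n + 1) = m :: hh n := by
    intro n
    obtain ⟨t, ht⟩ := hsuf n
    have := congrArg List.length ht
    rw [List.length_append, hlen, hlen] at this
    match t, this with
    | [m], _ => exact ⟨m, ht.symm⟩
    | [], h => simp at h
    | _ :: _ :: _, h => simp at h; omega
  choose mv hmv using hm
  refine ⟨hh, mv, hmv, fun n => ?_⟩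
  refine List.IsSuffix.eq_of_length (List.suffix_of_suffix_length_le
    ((hs _).trans (hmono _ (max (k (f n).length) n) (le_max_left _ _)))
    (hmono _ _ (le_max_right _ _)) (hlen _).le) (hlen _)

theorem Str.terminates {C : Ctx} (S : Str C) (f : ℕ → List Move) (g : ℕ → ℕ)
    (hf : ∀ n, f n <:+ f (n + 1)) (hd : ∀ n, g n < (S.st (f n)).nx)
    (hr : ∀ n, Relation.TransGen (fun a b => (a, b) ∈ (S.st (f (n + 1))).rel) (g n) (g (n + 1))) :
    False := by
  have hI := fun n => transGen_inv (S.inv _) (hr n)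
  have hg : ∀ n, n ≤ g n := by
    intro n
    induction n with
    | zero => exact Nat.zero_le _
    | succ n ih => have := (hI n).2.1; omega
  have hlen : ∀ k, ∃ n, k ≤ (f n).length := by
    intro k
    refine ⟨(S.st []).nx + k, ?_⟩
    have h1 := S.nx_le (f ((S.st []).nx + k))
    have h2 := hd ((S.st []).nx + k)
    have h3 := hg ((S.st []).nx + k)
    omega
  obtain ⟨hh, mv, hmv, hhf⟩ := thread f hf hlen
  let M : ℕ → Set Formula := fun n => (S.st (f n)).mks (g n)
  have hMe : ∀ n, (S.st (f (n + 1))).mks (g n) = M n := fun n => (S.le (hf n)).mks _ (hd n)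
  have hKe : ∀ n, (S.st (f (n + 1))).comp (g n) = (S.st (f n)).comp (g n) :=
    fun n => (S.le (hf n)).comp _ (hd n)
  have hfin : {B | Formula.box B ∈ C.Sb}.Finite :=
    C.fin.preimage (f := Formula.box) (fun a _ b _ h => by cases h; rfl)
  obtain ⟨N, hN⟩ := mono_stab hfin M (fun n B hB => ((S.inv _).mks _ _ hB).1)
    (fun n => by rw [← hMe n]; exact (hI n).2.2.2.1)
  have hK : ∀ n, N ≤ n → (S.st (f n)).comp (g n) = (S.st (f N)).comp (g N) := by
    intro n hn
    induction hn with
    | refl => rfl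
    | @step n hn ih =>
      rw [← ih, ← hKe n]
      refine (hI n).2.2.2.2 ?_
      rw [hMe n, hN n hn]
      exact (hN (n + 1) (Nat.le_succ_of_le hn)).symm
  obtain ⟨N', hN'⟩ := S.vis hh mv hmv ((S.st (f N)).comp (g N))
  have hs : ∀ i, Resp C (S.st (hh i)) (mv i) (S.st (hh (i + 1))) := by
    intro i; rw [hmv]; exact S.resp _ _
  let n := N + (S.st (hh N')).nx + (S.st (hh 0)).nx + (S.st (f N)).comp (g N) + 1
  have hn : n = N + (S.st (hh N')).nx + (S.st (hh 0)).nx + (S.st (f N)).comp (g N) + 1 := rfl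
  have hgn := hg n
  obtain ⟨i, hi, h1, h2⟩ := exists_creation hs (f n).length (g n) (by omega)
    (by rw [hhf]; exact hd n)
  have hc : (S.st (hh (i + 1))).comp (g n) = (S.st (f N)).comp (g N) := by
    have := (le_of_steps hs (i + 1) _ hi).comp (g n) (by omega)
    rw [← this, hhf]
    exact hK n (by omega)
  have hiN : N' ≤ i := by
    by_contra hlt
    have := (le_of_steps hs (i + 1) N' (by omega)).nx
    omega
  rcases (hs i).nx_cases with h | ⟨x, B, e1, e2, e3⟩ | ⟨x, B, e1, e2, e3⟩
  · omega
  · rw [e3] at hc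
    simp only [Pos.newDia, h1, Function.update_self] at hc
    refine hN' i hiN ?_
    rw [e1]; simp only [visOf]; rw [if_pos e2, hc]
  · rw [e3] at hc
    simp only [Pos.newBox, h1, Function.update_self] at hc
    omega

def Str.model {C : Ctx} (S : Str C) : Kripke {ms : List Move // Sat C (S.st ms)} ℕ where
  le w w' := w.1 <:+ w'.1
  le_refl _ := List.suffix_rfl
  le_trans _ _ _ h h' := h.trans h'
  le_antisymm u v h h' := Subtype.ext (h.eq_of_length (le_antisymm h.length_le h'.length_le))
  Dom w := {d | C.x0 ≤ d ∧ d < (S.st w.1).nx}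
  Dom_ne w := ⟨C.x0, le_rfl, (S.inv w.1).pos⟩
  Dom_mono w w' h d hd := ⟨hd.1, lt_of_lt_of_le hd.2 (S.le h).nx⟩
  Pr w p := {d | (d, Formula.atom p) ∈ (S.st w.1).left}
  Pr_sub w p d hd := ⟨((S.inv w.1).left _ _ hd).1, ((S.inv w.1).left _ _ hd).2.1⟩
  Pr_mono w w' p h d hd := (S.le h).left _ hd
  Rel w a b := Relation.TransGen (fun a b => (a, b) ∈ (S.st w.1).rel) a b
  Rel_dom w a b h := by
    obtain ⟨h1, h2, h3, _⟩ := transGen_inv (S.inv w.1) h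
    exact ⟨⟨h1, h2.trans h3⟩, ⟨h1.trans h2.le, h3⟩⟩
  Rel_mono w w' a b h hab := Relation.TransGen.mono (fun _ _ h' => (S.le h).rel h') _ _ hab

theorem Str.predIGL {C : Ctx} (S : Str C) : PredIGL S.model := by
  refine ⟨fun w a b c h h' => Relation.TransGen.trans h h', ?_⟩
  rintro ⟨f, g, h⟩
  exact S.terminates (fun n => (f n).1) g (fun n => (h n).2.1) (fun n => (h n).1.2)
    (fun n => (h n).2.2)

theorem Str.truth {C : Ctx} (S : Str C) (B : Formula) : B ∈ C.Sb →
    ∀ (w : {ms : List Move // Sat C (S.st ms)}) (d : ℕ),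
      ((d, B) ∈ (S.st w.1).left → ksat S.model w d B) ∧
      ((d, B) ∈ (S.st w.1).right → ¬ ksat S.model w d B) := by
  have np : ∀ w : {ms : List Move // Sat C (S.st ms)},
    ¬ Prov ⟨(S.st w.1).rel, (S.st w.1).left, (S.st w.1).right⟩ := fun w => S.notProv w.1
  have domL : ∀ (w : {ms : List Move // Sat C (S.st ms)}) d B, (d, B) ∈ (S.st w.1).left →
      ∀ D ∈ C.Sb, (d, D) ∈ (S.st w.1).left ∨ (d, D) ∈ (S.st w.1).right := fun w d B h D hD =>
    w.2.dec d D ((S.inv w.1).left _ _ h).1 ((S.inv w.1).left _ _ h).2.1 hD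
  have domR : ∀ (w : {ms : List Move // Sat C (S.st ms)}) d B, (d, B) ∈ (S.st w.1).right →
      ∀ D ∈ C.Sb, (d, D) ∈ (S.st w.1).left ∨ (d, D) ∈ (S.st w.1).right := fun w d B h D hD =>
    w.2.dec d D ((S.inv w.1).right _ _ h).1 ((S.inv w.1).right _ _ h).2.1 hD
  induction B with
  | atom p =>
    intro _ w d
    exact ⟨fun h => h, fun h h' => np w (Prov.idm d _ h' h)⟩
  | bot =>
    intro _ w d
    exact ⟨fun h => (np w (Prov.botL d h)).elim, fun _ h => h⟩
  | and A B ihA ihB =>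
    intro hm w d
    have hA := C.and1 hm; have hB := C.and2 hm
    constructor
    · intro h
      constructor
      · exact (ihA hA w d).1 ((domL w d _ h A hA).resolve_right
          fun h' => np w (Prov.andL₁ d A B h h'))
      · exact (ihB hB w d).1 ((domL w d _ h B hB).resolve_right
          fun h' => np w (Prov.andL₂ d A B h h'))
    · rintro h ⟨h1, h2⟩
      refine np w (Prov.andR d A B h ?_ ?_)
      · exact (domR w d _ h A hA).resolve_right fun h' => (ihA hA w d).2 h' h1
      · exact (domR w d _ h B hB).resolve_right fun h' => (ihB hB w d).2 h' h2
  | or A B ihA ihB =>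
    intro hm w d
    have hA := C.or1 hm; have hB := C.or2 hm
    constructor
    · intro h
      rcases domL w d _ h A hA with h1 | h1
      · exact Or.inl ((ihA hA w d).1 h1)
      · exact Or.inr ((ihB hB w d).1 ((domL w d _ h B hB).resolve_right
          fun h' => np w (Prov.orL d A B h h1 h')))
    · rintro h (h1 | h1)
      · exact np w (Prov.orR₁ d A B h ((domR w d _ h A hA).resolve_right
          fun h' => (ihA hA w d).2 h' h1))
      · exact np w (Prov.orR₂ d A B h ((domR w d _ h B hB).resolve_right
          fun h' => (ihB hB w d).2 h' h1))
  | imp A B ihA ihB =>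
    intro hm w d
    have hA := C.imp1 hm; have hB := C.imp2 hm
    constructor
    · intro h w' hw h1
      have h' := (S.le hw).left _ h
      have h2 := (domL w' d _ h' A hA).resolve_right fun h' => (ihA hA w' d).2 h' h1
      exact (ihB hB w' d).1 ((domL w' d _ h' B hB).resolve_right
        fun h3 => np w' (Prov.impL d A B h' h2 h3))
    · intro h h1
      have hr : S.st (.imp d A B :: w.1) = (S.st w.1).doImp d A B := by
        rcases S.resp w.1 (.imp d A B) with ⟨_, h2⟩ | ⟨h2, _⟩
        · exact h2
        · exact absurd h h2
      obtain ⟨ms', hs, hsat, hR⟩ := S.saturate (.imp d A B :: w.1)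
      refine (ihB hB ⟨ms', hsat⟩ d).2 (hR _ ?_) (h1 ⟨ms', hsat⟩
        ((List.suffix_cons _ _).trans hs) ((ihA hA ⟨ms', hsat⟩ d).1 ((S.le hs).left _ ?_)))
      · rw [hr]; exact Multiset.mem_singleton_self _
      · rw [hr]; exact Multiset.mem_cons_self _ _
  | box B ih =>
    intro hm w d
    have hB := C.box1 hm
    constructor
    · intro h w' e hw he
      have h' := (S.le hw).left _ h
      obtain ⟨k1, k2, k3, _⟩ := transGen_inv (S.inv w'.1) he
      exact (ih hB w' e).1 ((w'.2.dec e B (by omega) k3 hB).resolve_right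
        fun h3 => np w' (Prov.boxL d e B h' he h3))
    · intro h h1
      have hmk : B ∉ (S.st w.1).mks d := by
        intro hb
        obtain ⟨_, z, hz1, hz2⟩ := (S.inv w.1).mks d B hb
        exact np w (Prov.boxLR z d (S.st w.1).nx B (inv_fresh (S.inv w.1)) hz2 hz1 h)
      have hr : S.st (.box d B :: w.1) = (S.st w.1).newBox d B := by
        rcases S.resp w.1 (.box d B) with ⟨_, h2⟩ | ⟨h2, _⟩
        · exact h2
        · exact absurd ⟨h, hmk⟩ h2
      obtain ⟨ms', hs, hsat, hR⟩ := S.saturate (.box d B :: w.1)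
      refine (ih hB ⟨ms', hsat⟩ (S.st w.1).nx).2 (hR _ ?_) (h1 ⟨ms', hsat⟩ (S.st w.1).nx
        ((List.suffix_cons _ _).trans hs) (Relation.TransGen.single ((S.le hs).rel ?_)))
      · rw [hr]; exact Multiset.mem_singleton_self _
      · rw [hr]; exact Set.mem_insert _ _
  | dia B ih =>
    intro hm w d
    have hB := C.dia1 hm
    constructor
    · intro h
      obtain ⟨y, hy1, hy2⟩ := w.2.dia d B h
      exact ⟨y, Relation.TransGen.single hy1, (ih hB w y).1 hy2⟩
    · rintro h ⟨e, he, h1⟩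
      obtain ⟨k1, k2, k3, _⟩ := transGen_inv (S.inv w.1) he
      refine np w (Prov.diaR d e B h he ?_)
      exact (w.2.dec e B (by omega) k3 hB).resolve_right fun h3 => (ih hB w e).2 h3 h1

def subf : Formula → Set Formula
  | .atom p => {.atom p}
  | .bot => {.bot}
  | .and A B => insert (.and A B) (subf A ∪ subf B)
  | .or A B => insert (.or A B) (subf A ∪ subf B)
  | .imp A B => insert (.imp A B) (subf A ∪ subf B)
  | .box A => insert (.box A) (subf A)
  | .dia A => insert (.dia A) (subf A)

theorem subf_self (A : Formula) : A ∈ subf A := by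
  cases A <;> simp [subf]

theorem subf_fin (A : Formula) : (subf A).Finite := by
  induction A with
  | atom p => exact Set.finite_singleton _
  | bot => exact Set.finite_singleton _
  | and A B h1 h2 => exact (h1.union h2).insert _
  | or A B h1 h2 => exact (h1.union h2).insert _
  | imp A B h1 h2 => exact (h1.union h2).insert _
  | box A h => exact h.insert _
  | dia A h => exact h.insert _

theorem subf_trans {A B : Formula} (h : B ∈ subf A) : subf B ⊆ subf A := by
  induction A with
  | atom p => cases h; exact subset_rfl
  | bot => cases h; exact subset_rfl
  | and A D h1 h2 | or A D h1 h2 | imp A D h1 h2 =>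
    rcases h with rfl | h | h
    · exact subset_rfl
    · exact fun x hx => Or.inr (Or.inl (h1 h hx))
    · exact fun x hx => Or.inr (Or.inr (h2 h hx))
  | box A ih | dia A ih =>
    rcases h with rfl | h
    · exact subset_rfl
    · exact fun x hx => Or.inr (ih h hx)

def theCtx (A : Formula) (x : ℕ) : Ctx where
  Sb := subf A
  x0 := x
  fin := subf_fin A
  and1 h := subf_trans h (Or.inr (Or.inl (subf_self _)))
  and2 h := subf_trans h (Or.inr (Or.inr (subf_self _)))
  or1 h := subf_trans h (Or.inr (Or.inl (subf_self _)))
  or2 h := subf_trans h (Or.inr (Or.inr (subf_self _)))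
  imp1 h := subf_trans h (Or.inr (Or.inl (subf_self _)))
  imp2 h := subf_trans h (Or.inr (Or.inr (subf_self _)))
  box1 h := subf_trans h (Or.inr (subf_self _))
  dia1 h := subf_trans h (Or.inr (subf_self _))

def initPos (A : Formula) (x : ℕ) : Pos := ⟨x + 1, ∅, 0, {(x, A)}, id, fun _ => ∅⟩

theorem initInv (A : Formula) (x : ℕ) : Inv (theCtx A x) (initPos A x) := by
  refine ⟨Nat.lt_succ_self x, fun _ _ h => h.elim, fun _ _ h => absurd h (Multiset.notMem_zero _),
    ?_, fun _ => le_rfl, fun _ _ h => h.elim⟩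
  intro y B h
  have e := Multiset.mem_singleton.mp h
  cases e
  exact ⟨le_rfl, Nat.lt_succ_self x, subf_self A⟩

theorem exists_str (A : Formula) (x : ℕ) (h : ¬ Prov ⟨∅, 0, {(x, A)}⟩) :
    ∃ S : Str (theCtx A x), S.st [] = initPos A x := by
  obtain ⟨st, h1, h2, h3⟩ := Davis.davis (G := theGame (theCtx A x)) ⟨initPos A x, initInv A x⟩
    (fun hw => h (prov_of_win _ hw))
  exact ⟨⟨fun ms => (st ms).1, fun ms => (st ms).2, h2, h3⟩, congrArg Subtype.val h1⟩

/-- **Completeness of the multi-succedent calculus.** If the standard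
translation of `A` holds in every Kripke structure of pred-IGL then `∅ ⇒ x:A`
has an ∞-proof in mℓIK4. -/
theorem mlIGL_complete (A : Formula) (x : ℕ)
    (h : ∀ (W D : Type) (K : Kripke W D), Nonempty W → PredIGL K →
      ∀ (w : W) (ρ : ℕ → D), (∀ v, ρ v ∈ K.Dom w) → ∀ y : ℕ, ksat K w (ρ y) A) :
    InfProof RuleMLIK4 ⟨∅, 0, {(x, A)}⟩ := by
  by_contra hn
  obtain ⟨S, hS⟩ := exists_str A x hn
  obtain ⟨ms, _, hsat, hR⟩ := S.saturate []
  have hr : (x, A) ∈ (S.st ms).right := hR _ (by rw [hS]; exact Multiset.mem_singleton_self _)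
  have hi := (S.inv ms).right _ _ hr
  exact (S.truth A (subf_self A) ⟨ms, hsat⟩ x).2 hr
    (h _ _ S.model ⟨⟨ms, hsat⟩⟩ S.predIGL ⟨ms, hsat⟩ (fun _ => x) (fun _ => ⟨hi.1, hi.2.1⟩) 0)



end IGL
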